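/- arXiv:2112.03180 — 5 statements merged into one kernel-verified Lean document; each statement's English description precedes it below -/
import Mathlib

section
/- Let a < b be real numbers, let (M_n)_{n≥0} be a sequence of positive reals with M_0 = 1 which is log-convex (M_n^2 ≤ M_{n-1} M_{n+1} for all n ≥ 1), and assume: (A) there exists m_0 ≥ 0 such that M_j ≤ M_k^{j/k} · M_i^{j/i} for all integers i, j, k with i, k > m_0, i < j and j/i < k; (B) there exists c > 0 such that M_n ≥ c^n n^n for all n ≥ 1. Let (d_n)_{n≥0} be a strictly increasing sequence of positive integers tending to infinity with d_{n+1}/d_n ≤ c_0 for all n, for some constant c_0 > 0. If f : [a,b] → ℝ is C^∞ and max_{x∈[a,b]} |f^{(d_n)}(x)| ≤ M_{d_n} for every n, then f belongs to the Denjoy–Carleman class C^M([a,b]); that is, there exists K > 0 such that max_{x∈[a,b]} |f^{(n)}(x)| ≤ K^{n+1} M_n for all n ≥ 0. -/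
open Set Filter

/-- Bound for the coefficients of the falling factorial polynomials. -/
theorem abs_coeff_descPochhammer_mul_pow_le (r : ℝ) (hr : 0 ≤ r) (k j : ℕ) :
    |(descPochhammer ℝ k).coeff j| * r ^ j ≤ ∏ m ∈ Finset.range k, (r + m) := by
  induction k generalizing j with
  | zero =>
    rcases j with _ | j
    · simp
    · simp [Polynomial.coeff_one]
  | succ k ih =>
    rw [descPochhammer_succ_right, Finset.prod_range_succ,
      ← Polynomial.C_eq_natCast]
    have hk : (0 : ℝ) ≤ k := k.cast_nonneg
    rcases j with _ | j
    · have h := ih 0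
      simp only [Polynomial.mul_coeff_zero, Polynomial.coeff_sub, Polynomial.coeff_X_zero,
        Polynomial.coeff_C_zero, pow_zero, mul_one, zero_sub, abs_mul, abs_neg, Nat.abs_cast]
        at h ⊢
      exact mul_le_mul h (by linarith) hk ((abs_nonneg _).trans h)
    · rw [Polynomial.coeff_mul_X_sub_C]
      calc _ ≤ (|(descPochhammer ℝ k).coeff j| + |(descPochhammer ℝ k).coeff (j + 1) * k|)
              * r ^ (j + 1) := by gcongr; exact abs_sub _ _
        _ = |(descPochhammer ℝ k).coeff j| * r ^ j * r
              + |(descPochhammer ℝ k).coeff (j + 1)| * r ^ (j + 1) * k := by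
            rw [abs_mul, Nat.abs_cast]; ring
        _ ≤ _ := by
            rw [mul_add]
            gcongr
            · exact ih j
            · exact ih (j + 1)

theorem abs_fwdDiff_iter_le (u : ℕ → ℝ) (A : ℝ) (k : ℕ) (hu : ∀ i ≤ k, |u i| ≤ A) :
    |(fwdDiff 1)^[k] u 0| ≤ 2 ^ k * A := by
  rw [fwdDiff_iter_eq_sum_shift]
  calc _ ≤ ∑ i ∈ Finset.range (k + 1), (k.choose i : ℝ) * A := by
        refine (Finset.abs_sum_le_sum_abs _ _).trans (Finset.sum_le_sum fun i hi => ?_)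
        have hi' : i ≤ k := Nat.lt_succ_iff.mp (Finset.mem_range.mp hi)
        simp only [zsmul_eq_mul, Int.cast_mul, Int.cast_pow, Int.cast_neg, Int.cast_one,
          Int.cast_natCast, abs_mul, abs_pow, abs_neg, abs_one, one_pow, one_mul, Nat.abs_cast,
          smul_eq_mul, mul_one, zero_add]
        exact mul_le_mul_of_nonneg_left (hu i hi') (Nat.cast_nonneg _)
    _ = 2 ^ k * A := by
        rw [← Finset.sum_mul]
        congr 1
        exact_mod_cast Nat.sum_range_choose k

/-- Newton's forward difference formula for polynomials. -/
theorem eq_sum_fwdDiff_mul_descPochhammer (P : Polynomial ℝ) (N : ℕ) (hP : P.degree < N) :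
    P = ∑ k ∈ Finset.range N, Polynomial.C
      ((fwdDiff 1)^[k] (fun i : ℕ => P.eval (i : ℝ)) 0 / k.factorial) * descPochhammer ℝ k := by
  refine Polynomial.eq_of_degrees_lt_of_eval_index_eq (v := fun i : ℕ => (i : ℝ))
    (Finset.range N) (fun x _ y _ h => Nat.cast_injective h) (by simpa using hP) ?_ ?_
  · rw [Finset.card_range]
    refine Polynomial.mem_degreeLT.mp (Submodule.sum_mem _ fun k hk =>
      Polynomial.mem_degreeLT.mpr ?_)
    rw [← Polynomial.smul_eq_C_mul]
    refine (Polynomial.degree_smul_le _ _).trans_lt ?_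
    rw [Polynomial.degree_eq_natDegree (monic_descPochhammer ℝ k).ne_zero,
      descPochhammer_natDegree]
    exact_mod_cast Finset.mem_range.mp hk
  · intro i hi
    have h := shift_eq_sum_fwdDiff_iter 1 (fun i : ℕ => P.eval (i : ℝ)) i 0
    simp only [smul_eq_mul, mul_one, zero_add] at h
    rw [h, Polynomial.eval_finsetSum]
    simp only [Polynomial.eval_mul, Polynomial.eval_C, descPochhammer_eval_eq_descFactorial,
      nsmul_eq_mul]
    rw [← Finset.sum_subset (Finset.range_subset_range.mpr (Finset.mem_range.mp hi))]
    · refine Finset.sum_congr rfl fun k _ => ?_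
      rw [Nat.descFactorial_eq_factorial_mul_choose]
      have := k.factorial_ne_zero
      push_cast
      field_simp
    · intro k _ hk
      rw [Nat.descFactorial_of_lt (by simpa using hk)]
      simp

/-- A polynomial of degree less than `N` which is bounded at `0, …, N - 1` has controlled
coefficients. -/
theorem abs_coeff_mul_pow_le_of_eval_nat_le (P : Polynomial ℝ) (N : ℕ) (hP : P.degree < N)
    (A : ℝ) (hA : ∀ i < N, |P.eval (i : ℝ)| ≤ A) (hA0 : 0 ≤ A) (j : ℕ) :
    |P.coeff j| * (N : ℝ) ^ j ≤ 8 ^ N * A := by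
  have hprod : ∀ k < N, ∏ m ∈ Finset.range k, ((N : ℝ) + m) ≤ k.factorial * 4 ^ N := by
    intro k hk
    have h1 : ∏ m ∈ Finset.range k, (N + m) ≤ k.factorial * 4 ^ N := by
      rw [← Nat.ascFactorial_eq_prod_range, Nat.ascFactorial_eq_factorial_mul_choose']
      refine Nat.mul_le_mul_left _ ((Nat.choose_le_two_pow _ _).trans ?_)
      calc 2 ^ (N + k - 1) ≤ 2 ^ (2 * N) := Nat.pow_le_pow_right (by norm_num) (by omega)
        _ = 4 ^ N := by rw [pow_mul]; norm_num
    exact_mod_cast h1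
  have hterm : ∀ k < N, |(Polynomial.C
      ((fwdDiff 1)^[k] (fun i : ℕ => P.eval (i : ℝ)) 0 / k.factorial) *
        descPochhammer ℝ k).coeff j| * (N : ℝ) ^ j ≤ 2 ^ k * (4 ^ N * A) := by
    intro k hk
    have hf : (0 : ℝ) < k.factorial := by exact_mod_cast k.factorial_pos
    have h1 := abs_fwdDiff_iter_le (fun i : ℕ => P.eval (i : ℝ)) A k
      fun i hi => hA i (hi.trans_lt hk)
    have h2 := (abs_coeff_descPochhammer_mul_pow_le N N.cast_nonneg k j).trans (hprod k hk)
    rw [Polynomial.coeff_C_mul, abs_mul, abs_div, Nat.abs_cast, mul_assoc]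
    calc _ ≤ (2 ^ k * A) / k.factorial * (k.factorial * 4 ^ N) := by gcongr
      _ = _ := by field_simp
  calc |P.coeff j| * (N : ℝ) ^ j
      ≤ ∑ k ∈ Finset.range N, 2 ^ k * (4 ^ N * A) := by
        conv_lhs => rw [eq_sum_fwdDiff_mul_descPochhammer P N hP, Polynomial.finsetSum_coeff]
        refine (mul_le_mul_of_nonneg_right (Finset.abs_sum_le_sum_abs _ _)
          (by positivity)).trans ?_
        rw [Finset.sum_mul]
        exact Finset.sum_le_sum fun k hk => hterm k (Finset.mem_range.mp hk)
    _ ≤ 2 ^ N * (4 ^ N * A) := by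
        rw [← Finset.sum_mul]
        gcongr
        exact_mod_cast (Nat.geomSum_lt (m := 2) le_rfl
          fun k hk => Finset.mem_range.mp hk).le
    _ = 8 ^ N * A := by rw [← mul_assoc, ← mul_pow]; norm_num

/-- Iterated derivatives of `F 0` along a segment, where `F (n + 1)` is the derivative
of `F n`. -/
theorem iteratedDerivWithin_comp_segment (F : ℕ → ℝ → ℝ) (s : Set ℝ)
    (hF : ∀ n, ∀ x ∈ s, HasDerivWithinAt (F n) (F (n + 1) x) s x) (x θ r : ℝ) (hr : 0 < r)
    (hs : MapsTo (fun t => x + t * θ) (Icc 0 r) s) (n : ℕ) :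
    ∀ t ∈ Icc 0 r, iteratedDerivWithin n (fun t => F 0 (x + t * θ)) (Icc 0 r) t
      = θ ^ n * F n (x + t * θ) := by
  induction n with
  | zero => intro t _; simp
  | succ n ih =>
    intro t ht
    rw [iteratedDerivWithin_succ, derivWithin_congr ih (ih t ht)]
    refine HasDerivWithinAt.derivWithin ?_ (uniqueDiffOn_Icc hr t ht)
    have h1 : HasDerivWithinAt (fun t => x + t * θ) θ (Icc 0 r) t := by
      simpa using (((hasDerivAt_id t).mul_const θ).const_add x).hasDerivWithinAt
    have h2 := ((hF n _ (hs ht)).comp t h1 hs).const_mul (θ ^ n)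
    exact h2.congr_deriv (by simp only [pow_succ]; ring)

theorem contDiffOn_comp_segment (F : ℕ → ℝ → ℝ) (s : Set ℝ)
    (hF : ∀ n, ∀ x ∈ s, HasDerivWithinAt (F n) (F (n + 1) x) s x) (x θ r : ℝ) (hr : 0 < r)
    (hs : MapsTo (fun t => x + t * θ) (Icc 0 r) s) (n : ℕ) :
    ContDiffOn ℝ n (fun t => F 0 (x + t * θ)) (Icc 0 r) := by
  refine contDiffOn_of_differentiableOn_deriv (n := (n : ℕ∞)) fun m _ => ?_
  refine DifferentiableOn.congr (f := fun t => θ ^ m * F m (x + t * θ)) ?_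
    (iteratedDerivWithin_comp_segment F s hF x θ r hr hs m)
  intro t ht
  have h1 : HasDerivWithinAt (fun t => x + t * θ) θ (Icc 0 r) t := by
    simpa using (((hasDerivAt_id t).mul_const θ).const_add x).hasDerivWithinAt
  exact (((hF m _ (hs ht)).comp t h1 hs).const_mul (θ ^ m)).differentiableWithinAt

theorem natCast_pow_succ_div_factorial_le (n : ℕ) :
    ((n + 1 : ℕ) : ℝ) ^ (n + 1) / n.factorial ≤ 6 ^ (n + 1) := by
  have h1 := Real.pow_div_factorial_le_exp ((n + 1 : ℕ) : ℝ) (by positivity) n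
  have h2 : Real.exp ((n + 1 : ℕ) : ℝ) ≤ 3 ^ (n + 1) := by
    rw [← Real.exp_one_pow]
    exact pow_le_pow_left₀ (Real.exp_pos 1).le Real.exp_one_lt_three.le _
  have h3 : ((n + 1 : ℕ) : ℝ) ≤ 2 ^ (n + 1) := by exact_mod_cast Nat.lt_two_pow_self.le
  calc ((n + 1 : ℕ) : ℝ) ^ (n + 1) / n.factorial
      = ((n + 1 : ℕ) : ℝ) ^ n / n.factorial * ((n + 1 : ℕ) : ℝ) := by rw [pow_succ]; ring
    _ ≤ 3 ^ (n + 1) * 2 ^ (n + 1) := by gcongr; exact h1.trans h2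
    _ = 6 ^ (n + 1) := by rw [← mul_pow]; norm_num

/-- A one-step Landau–Kolmogorov type inequality along a segment contained in `s`. -/
theorem abs_deriv_mul_pow_le_of_segment (F : ℕ → ℝ → ℝ) (s : Set ℝ)
    (hF : ∀ n, ∀ x ∈ s, HasDerivWithinAt (F n) (F (n + 1) x) s x) (x θ : ℝ) (N : ℕ)
    (hs : MapsTo (fun t => x + t * θ) (Icc 0 (N : ℝ)) s) (A B : ℝ)
    (hA : ∀ y ∈ s, |F 0 y| ≤ A) (hB : ∀ y ∈ s, |F N y| ≤ B) (j : ℕ) (hj : j < N) :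
    |F j x| * |θ| ^ j ≤ 48 ^ N * (A + B * |θ| ^ N) := by
  obtain ⟨n, rfl⟩ : ∃ n, N = n + 1 := ⟨N - 1, by omega⟩
  have hr : (0 : ℝ) < (n + 1 : ℕ) := by positivity
  have hxs : x ∈ s := by simpa using hs (left_mem_Icc.mpr hr.le)
  have hA0 : 0 ≤ A := (abs_nonneg _).trans (hA x hxs)
  have hB0 : 0 ≤ B := (abs_nonneg _).trans (hB x hxs)
  set φ : ℝ → ℝ := fun t => F 0 (x + t * θ) with hφ
  have hder := iteratedDerivWithin_comp_segment F s hF x θ _ hr hs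
  let P : Polynomial ℝ := ∑ k ∈ Finset.range (n + 1),
    Polynomial.monomial k ((k.factorial : ℝ)⁻¹ * (θ ^ k * F k x))
  have hPdeg : P.degree < (n + 1 : ℕ) := by
    refine Polynomial.mem_degreeLT.mp (Submodule.sum_mem _ fun k hk =>
      Polynomial.mem_degreeLT.mpr ?_)
    refine (Polynomial.degree_monomial_le _ _).trans_lt ?_
    exact_mod_cast Finset.mem_range.mp hk
  have hPcoeff : P.coeff j = (j.factorial : ℝ)⁻¹ * (θ ^ j * F j x) := by
    simp only [P, Polynomial.finsetSum_coeff, Polynomial.coeff_monomial]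
    rw [Finset.sum_ite_eq' (Finset.range (n + 1)) j, if_pos (Finset.mem_range.mpr hj)]
  have hPeval : ∀ t, P.eval t = taylorWithinEval φ n (Icc 0 ((n + 1 : ℕ) : ℝ)) 0 t := by
    intro t
    rw [taylor_within_apply, Polynomial.eval_finsetSum]
    refine Finset.sum_congr rfl fun k _ => ?_
    rw [hder k 0 (left_mem_Icc.mpr hr.le)]
    simp only [Polynomial.eval_monomial, sub_zero, zero_mul, add_zero, smul_eq_mul]
    ring
  have hPbound : ∀ i < n + 1, |P.eval (i : ℝ)| ≤ A + B * |θ| ^ (n + 1) * 6 ^ (n + 1) := by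
    intro i hi
    have hi' : (i : ℝ) ∈ Icc 0 ((n + 1 : ℕ) : ℝ) :=
      ⟨i.cast_nonneg, by exact_mod_cast hi.le⟩
    have h1 := taylor_mean_remainder_bound (f := φ) (C := B * |θ| ^ (n + 1)) (n := n) hr.le
      (by exact_mod_cast contDiffOn_comp_segment F s hF x θ _ hr hs (n + 1)) hi' (by
        intro y hy
        rw [hder (n + 1) y hy, Real.norm_eq_abs, abs_mul, abs_pow, mul_comm]
        gcongr
        exact hB _ (hs hy))
    rw [← hPeval, Real.norm_eq_abs, sub_zero] at h1
    have h2 : |φ i| ≤ A := hA _ (hs hi')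
    have h3 : B * |θ| ^ (n + 1) * (i : ℝ) ^ (n + 1) / n.factorial
        ≤ B * |θ| ^ (n + 1) * 6 ^ (n + 1) := by
      rw [mul_div_assoc]
      gcongr
      refine le_trans ?_ (natCast_pow_succ_div_factorial_le n)
      gcongr
    have h4 : |P.eval (i : ℝ)| ≤ |φ i| + |φ i - P.eval (i : ℝ)| := by
      rw [abs_sub_comm]
      have := abs_add_le (φ i) (P.eval (i : ℝ) - φ i)
      simpa using this
    linarith
  have hmain := abs_coeff_mul_pow_le_of_eval_nat_le P (n + 1) hPdeg _ hPbound (by positivity) j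
  have hfac : (j.factorial : ℝ) ≤ ((n + 1 : ℕ) : ℝ) ^ j := by
    have : j.factorial ≤ (n + 1) ^ j :=
      j.factorial_le_pow.trans (Nat.pow_le_pow_left hj.le j)
    exact_mod_cast this
  have hfpos : (0 : ℝ) < j.factorial := by exact_mod_cast j.factorial_pos
  rw [hPcoeff, abs_mul, abs_inv, Nat.abs_cast, abs_mul, abs_pow] at hmain
  calc |F j x| * |θ| ^ j
      = (j.factorial : ℝ)⁻¹ * (|θ| ^ j * |F j x|) * j.factorial := by field_simp
    _ ≤ (j.factorial : ℝ)⁻¹ * (|θ| ^ j * |F j x|) * ((n + 1 : ℕ) : ℝ) ^ j := by gcongr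
    _ ≤ 8 ^ (n + 1) * (A + B * |θ| ^ (n + 1) * 6 ^ (n + 1)) := hmain
    _ ≤ 8 ^ (n + 1) * (A * 6 ^ (n + 1) + B * |θ| ^ (n + 1) * 6 ^ (n + 1)) := by
        gcongr
        exact le_mul_of_one_le_right hA0 (one_le_pow₀ (by norm_num))
    _ = (8 * 6) ^ (n + 1) * (A + B * |θ| ^ (n + 1)) := by rw [mul_pow]; ring
    _ = _ := by norm_num

/-- A Landau–Kolmogorov type inequality on a compact interval. -/
theorem abs_deriv_mul_pow_le_of_Icc (F : ℕ → ℝ → ℝ) (a b : ℝ)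
    (hF : ∀ n, ∀ x ∈ Icc a b, HasDerivWithinAt (F n) (F (n + 1) x) (Icc a b) x) (θ : ℝ)
    (hθ : 0 ≤ θ) (N : ℕ) (hN : N * θ ≤ (b - a) / 2) (A B : ℝ)
    (hA : ∀ y ∈ Icc a b, |F 0 y| ≤ A) (hB : ∀ y ∈ Icc a b, |F N y| ≤ B) (j : ℕ) (hj : j < N)
    (x : ℝ) (hx : x ∈ Icc a b) :
    |F j x| * θ ^ j ≤ 48 ^ N * (A + B * θ ^ N) := by
  have hbd : ∀ t ∈ Icc (0 : ℝ) N, 0 ≤ t * θ ∧ t * θ ≤ (b - a) / 2 := fun t ht =>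
    ⟨mul_nonneg ht.1 hθ, (mul_le_mul_of_nonneg_right ht.2 hθ).trans hN⟩
  rcases le_total x ((a + b) / 2) with h | h
  · have := abs_deriv_mul_pow_le_of_segment F (Icc a b) hF x θ N
      (fun t ht => ⟨by linarith [hx.1, (hbd t ht).1], by linarith [(hbd t ht).2]⟩) A B hA hB j hj
    rwa [abs_of_nonneg hθ] at this
  · have := abs_deriv_mul_pow_le_of_segment F (Icc a b) hF x (-θ) N
      (fun t ht => ⟨by linarith [(hbd t ht).2], by linarith [hx.2, (hbd t ht).1]⟩) A B hA hB j hj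
    rwa [abs_neg, abs_of_nonneg hθ] at this

theorem pow_succ_le_pow_of_logConvex (M : ℕ → ℝ) (hMpos : ∀ n, 0 < M n) (hM0 : M 0 = 1)
    (hlogconv : ∀ n : ℕ, 1 ≤ n → (M n) ^ 2 ≤ M (n - 1) * M (n + 1)) (n : ℕ) :
    M n ^ (n + 1) ≤ M (n + 1) ^ n := by
  induction n with
  | zero => simp [hM0]
  | succ n ih =>
    have h := hlogconv (n + 1) (by omega)
    simp only [Nat.add_sub_cancel] at h
    have hp := pow_pos (hMpos (n + 1)) n
    refine le_of_mul_le_mul_left ?_ hp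
    calc M (n + 1) ^ n * M (n + 1) ^ (n + 1 + 1) = (M (n + 1) ^ 2) ^ (n + 1) := by ring
      _ ≤ (M n * M (n + 1 + 1)) ^ (n + 1) := by gcongr
      _ = M n ^ (n + 1) * M (n + 1 + 1) ^ (n + 1) := mul_pow _ _ _
      _ ≤ M (n + 1) ^ n * M (n + 1 + 1) ^ (n + 1) := by
          have := (hMpos (n + 1 + 1)).le
          gcongr

theorem le_pow_of_logConvex (M : ℕ → ℝ) (hMpos : ∀ n, 0 < M n) (hM0 : M 0 = 1)
    (hlogconv : ∀ n : ℕ, 1 ≤ n → (M n) ^ 2 ≤ M (n - 1) * M (n + 1)) (μ : ℝ) (hμ : 0 ≤ μ)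
    (p l : ℕ) (hpl : p ≤ l) (h : M l ≤ μ ^ l) : M p ≤ μ ^ p := by
  induction l, hpl using Nat.le_induction with
  | base => exact h
  | succ n _ ih =>
    refine ih (le_of_pow_le_pow_left₀ n.succ_ne_zero (by positivity) ?_)
    calc M n ^ (n + 1) ≤ M (n + 1) ^ n := pow_succ_le_pow_of_logConvex M hMpos hM0 hlogconv n
      _ ≤ (μ ^ (n + 1)) ^ n := pow_le_pow_left₀ (hMpos _).le h n
      _ = (μ ^ n) ^ (n + 1) := by ring

theorem hasDerivWithinAt_iteratedDerivWithin (f : ℝ → ℝ) (s : Set ℝ) (hs : UniqueDiffOn ℝ s)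
    (hf : ContDiffOn ℝ (⊤ : ℕ∞) f s) (n : ℕ) (x : ℝ) (hx : x ∈ s) :
    HasDerivWithinAt (iteratedDerivWithin n f s) (iteratedDerivWithin (n + 1) f s x) s x := by
  rw [iteratedDerivWithin_succ]
  exact (hf.differentiableOn_iteratedDerivWithin (by exact_mod_cast WithTop.coe_lt_top n) hs
    x hx).hasDerivWithinAt

/-- Finitely many derivatives are bounded by a common multiple of the weights. -/
theorem exists_bound_iteratedDerivWithin_lt (a b : ℝ) (hab : a < b) (M : ℕ → ℝ)
    (hMpos : ∀ n, 0 < M n) (f : ℝ → ℝ) (hf : ContDiffOn ℝ (⊤ : ℕ∞) f (Icc a b)) (n₀ : ℕ) :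
    ∃ T : ℝ, 1 ≤ T ∧ ∀ n < n₀, ∀ x ∈ Icc a b,
      |iteratedDerivWithin n f (Icc a b) x| ≤ T * M n := by
  induction n₀ with
  | zero => exact ⟨1, le_rfl, fun n hn => absurd hn n.not_lt_zero⟩
  | succ n₀ ih =>
    obtain ⟨T, hT1, hT⟩ := ih
    obtain ⟨C, hC⟩ := isCompact_Icc.exists_bound_of_continuousOn
      (hf.continuousOn_iteratedDerivWithin (m := n₀) (by exact_mod_cast le_top)
        (uniqueDiffOn_Icc hab))
    refine ⟨max T (C / M n₀), hT1.trans (le_max_left _ _), fun n hn x hx => ?_⟩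
    rcases Nat.lt_succ_iff_lt_or_eq.mp hn with h | rfl
    · exact (hT n h x hx).trans (mul_le_mul_of_nonneg_right (le_max_left _ _) (hMpos n).le)
    · calc _ ≤ C := hC x hx
        _ = C / M n * M n := by have := (hMpos n).ne'; field_simp
        _ ≤ _ := mul_le_mul_of_nonneg_right (le_max_right _ _) (hMpos n).le

theorem exists_le_lt_succ_of_tendsto (d : ℕ → ℕ) (hdtop : Tendsto d atTop atTop) (n : ℕ)
    (hn : d 0 ≤ n) : ∃ k, d k ≤ n ∧ n < d (k + 1) := by
  by_contra! h
  have hall : ∀ k, d k ≤ n := fun k => by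
    induction k with
    | zero => exact hn
    | succ k ih => exact h k ih
  obtain ⟨k, hk⟩ := (hdtop.eventually_gt_atTop n).exists
  exact absurd (hall k) (not_le.mpr hk)

/-- **Theorem 1 (main theorem).** If a smooth `f` on `[a,b]` satisfies
`max |f^(d n)| ≤ M (d n)` along a sequence `d` with bounded ratios
`d (n+1) / d n ≤ c₀`, and the log-convex sequence `M` satisfies the
interpolation condition (A) and contains the analytic class (B), then
`f` lies in the Denjoy–Carleman class `C^M([a,b])`. -/
theorem interpolation_DenjoyCarleman
    (a b : ℝ) (hab : a < b)
    (M : ℕ → ℝ) (hMpos : ∀ n, 0 < M n) (hM0 : M 0 = 1)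
    (hlogconv : ∀ n : ℕ, 1 ≤ n → (M n) ^ 2 ≤ M (n - 1) * M (n + 1))
    (m₀ : ℝ) (hm₀ : 0 ≤ m₀)
    (hA : ∀ i j k : ℕ, m₀ < (i : ℝ) → m₀ < (k : ℝ) → i < j → (j : ℝ) / (i : ℝ) < (k : ℝ) →
      M j ≤ (M k) ^ ((j : ℝ) / (k : ℝ)) * (M i) ^ ((j : ℝ) / (i : ℝ)))
    (c : ℝ) (hc : 0 < c)
    (hB : ∀ n : ℕ, 1 ≤ n → c ^ n * (n : ℝ) ^ n ≤ M n)
    (d : ℕ → ℕ) (hdpos : ∀ n, 0 < d n) (hdmono : StrictMono d)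
    (hdtop : Tendsto d atTop atTop)
    (c₀ : ℝ) (hc₀ : 0 < c₀)
    (hgap : ∀ n, (d (n + 1) : ℝ) / (d n : ℝ) ≤ c₀)
    (f : ℝ → ℝ) (hf : ContDiffOn ℝ (⊤ : ℕ∞) f (Icc a b))
    (hbound : ∀ n, ∀ x ∈ Icc a b, |iteratedDerivWithin (d n) f (Icc a b) x| ≤ M (d n)) :
    ∃ K > 0, ∀ n : ℕ, ∀ x ∈ Icc a b,
      |iteratedDerivWithin n f (Icc a b) x| ≤ K ^ (n + 1) * M n := by
  obtain ⟨k, hk⟩ := exists_nat_gt (max m₀ c₀)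
  have hkm : m₀ < k := (le_max_left _ _).trans_lt hk
  have hkc : c₀ < k := (le_max_right _ _).trans_lt hk
  obtain ⟨T, hT1, hT⟩ := exists_bound_iteratedDerivWithin_lt a b hab M hMpos f hf
    (max (d 0) (k + 1))
  set C : ℝ := max 1 (M k ^ ((1 : ℝ) / k)) with hC
  have hC1 : 1 ≤ C := le_max_left _ _
  set ε : ℝ := min 1 (c * (b - a) / (2 * c₀)) with hε
  have hε0 : 0 < ε := lt_min one_pos (by have := sub_pos.mpr hab; positivity)
  have hε1 : ε ≤ 1 := min_le_left _ _
  set D : ℝ := 96 * C / ε with hD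
  have hD1 : 1 ≤ D := by rw [hD, le_div_iff₀ hε0]; linarith
  have hDk1 : 1 ≤ D ^ k := one_le_pow₀ hD1
  refine ⟨max T (D ^ k), by positivity, fun l x hx => ?_⟩
  rcases lt_or_ge l (max (d 0) (k + 1)) with hl | hl
  · refine (hT l hl x hx).trans (mul_le_mul_of_nonneg_right ?_ (hMpos l).le)
    calc T ≤ max T (D ^ k) := le_max_left _ _
      _ ≤ _ := le_self_pow₀ (hT1.trans (le_max_left _ _)) l.succ_ne_zero
  have hld : d 0 ≤ l := (le_max_left _ _).trans hl
  have hlk : k < l := (le_max_right _ _).trans hl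
  obtain ⟨i, hpl, hlq⟩ := exists_le_lt_succ_of_tendsto d hdtop l hld
  set p := d i with hp
  set q := d (i + 1) with hq
  have hp0 : (0 : ℝ) < p := by exact_mod_cast hdpos i
  have hl0 : (0 : ℝ) < l := by exact_mod_cast (hdpos i).trans_le hpl
  have hpl' : (p : ℝ) ≤ l := by exact_mod_cast hpl
  have hqc : (q : ℝ) ≤ c₀ * l := by
    have := (div_le_iff₀ hp0).mp (hgap i)
    nlinarith
  have hqkl : q ≤ k * l := by
    have : (q : ℝ) ≤ k * l := hqc.trans (by gcongr)
    exact_mod_cast this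
  set μ : ℝ := M l ^ ((1 : ℝ) / l) with hμ
  have hμ0 : 0 < μ := Real.rpow_pos_of_pos (hMpos l) _
  have hμl : μ ^ l = M l := by
    rw [hμ, ← Real.rpow_natCast, ← Real.rpow_mul (hMpos l).le, one_div_mul_cancel hl0.ne',
      Real.rpow_one]
  have hcμ : c * l ≤ μ := by
    refine le_of_pow_le_pow_left₀ (n := l) (by exact_mod_cast hl0.ne') hμ0.le ?_
    rw [hμl, mul_pow]
    exact hB l (by omega)
  have hMp : M p ≤ μ ^ p :=
    le_pow_of_logConvex M hMpos hM0 hlogconv μ hμ0.le p l hpl hμl.ge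
  have hMq : M q ≤ C ^ q * μ ^ q := by
    have h1 := hA l q k (hkm.trans (by exact_mod_cast hlk)) hkm hlq
      (((div_le_iff₀ hl0).mpr hqc).trans_lt hkc)
    have hroot : ∀ m : ℕ, M m ^ ((q : ℝ) / m) = (M m ^ ((1 : ℝ) / m)) ^ q := fun m => by
      rw [← Real.rpow_natCast, ← Real.rpow_mul (hMpos m).le, one_div_mul_eq_div]
    rw [hroot, hroot] at h1
    refine h1.trans ?_
    gcongr
    · exact Real.rpow_nonneg (hMpos k).le _
    · exact le_max_right _ _
  obtain ⟨N, hN⟩ : ∃ N, q = p + N := ⟨q - p, by omega⟩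
  obtain ⟨j, hj⟩ : ∃ j, l = p + j := ⟨l - p, by omega⟩
  have hjN : j < N := by omega
  set θ : ℝ := ε / μ with hθ
  have hθ0 : 0 < θ := by positivity
  have hNθ : N * θ ≤ (b - a) / 2 := by
    have h1 : (N : ℝ) ≤ c₀ * l := le_trans (by exact_mod_cast (by omega : N ≤ q)) hqc
    have h2 : ε ≤ c * (b - a) / (2 * c₀) := min_le_right _ _
    rw [le_div_iff₀ (by positivity)] at h2
    rw [hθ, ← mul_div_assoc, div_le_iff₀ hμ0]
    have hba := sub_pos.mpr hab
    calc N * ε ≤ c₀ * l * ε := by gcongr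
      _ = (ε * (2 * c₀)) * l / 2 := by ring
      _ ≤ c * (b - a) * l / 2 := by gcongr
      _ = (b - a) / 2 * (c * l) := by ring
      _ ≤ (b - a) / 2 * μ := by gcongr
  have hint := abs_deriv_mul_pow_le_of_Icc (fun n => iteratedDerivWithin (p + n) f (Icc a b)) a b
    (fun n y hy => hasDerivWithinAt_iteratedDerivWithin f _ (uniqueDiffOn_Icc hab) hf (p + n) y hy)
    θ hθ0.le N hNθ (M p) (M q) (fun y hy => hbound i y hy)
    (fun y hy => by
      rw [← hN]
      exact hbound (i + 1) y hy) j hjN x hx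
  simp only [← hj] at hint
  have hright : M p + M q * θ ^ N ≤ 2 * C ^ q * μ ^ p := by
    have h1 : μ ^ p ≤ C ^ q * μ ^ p := le_mul_of_one_le_left (by positivity) (one_le_pow₀ hC1)
    have h2 : M q * θ ^ N ≤ C ^ q * μ ^ p := by
      calc M q * θ ^ N ≤ C ^ q * μ ^ q * θ ^ N := by gcongr
        _ = C ^ q * μ ^ p * ε ^ N := by
            rw [hθ, div_pow, hN, pow_add μ]; field_simp
        _ ≤ C ^ q * μ ^ p := mul_le_of_le_one_right (by positivity) (pow_le_one₀ hε0.le hε1)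
    linarith
  have hfinal : |iteratedDerivWithin l f (Icc a b) x| ≤ D ^ q * M l := by
    have hq0 : q ≠ 0 := by omega
    have h48 : (48 : ℝ) ^ N ≤ 48 ^ q := pow_le_pow_right₀ (by norm_num) (by omega)
    have h2q : (2 : ℝ) ≤ 2 ^ q := le_self_pow₀ (by norm_num) hq0
    have hεq : ε ^ q ≤ ε ^ j := pow_le_pow_of_le_one hε0.le hε1 (by omega)
    have hθj : 0 < θ ^ j := by positivity
    refine le_of_mul_le_mul_right ?_ hθj
    calc _ ≤ 48 ^ N * (2 * C ^ q * μ ^ p) := hint.trans (by gcongr)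
      _ ≤ 48 ^ q * (2 ^ q * C ^ q * μ ^ p) := by gcongr
      _ = D ^ q * ε ^ q * μ ^ p := by
          rw [hD, div_pow, div_mul_cancel₀ _ (by positivity), ← mul_assoc, ← mul_assoc,
            ← mul_pow, ← mul_pow]
          norm_num
      _ ≤ D ^ q * ε ^ j * μ ^ p := by gcongr
      _ = D ^ q * M l * θ ^ j := by
          rw [← hμl, hθ, div_pow ε μ, hj, pow_add]; field_simp
  refine hfinal.trans (mul_le_mul_of_nonneg_right ?_ (hMpos l).le)
  calc D ^ q ≤ D ^ (k * l) := pow_le_pow_right₀ hD1 hqkl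
    _ = (D ^ k) ^ l := pow_mul _ _ _
    _ ≤ (D ^ k) ^ (l + 1) := pow_le_pow_right₀ hDk1 l.le_succ
    _ ≤ _ := pow_le_pow_left₀ (by positivity) (le_max_right _ _) _
end

section
/- Let a < b, let f : [a,b] → ℝ be C^∞, let (d_n)_{n≥0} be a strictly increasing sequence of positive integers tending to infinity, and suppose there exists c > 0 such that max_{x∈[a,b]} |f^{(d_n)}(x)| ≤ c^{d_n} · d_n^{d_n} for every n. If f vanishes of infinite order at some point x_0 ∈ [a,b] (i.e. f^{(k)}(x_0) = 0 for every k ≥ 0), then f is identically zero on [a,b]. -/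
open Set Filter

/-- Taylor estimate on a convex set: if the first `N` derivatives of `f` vanish at `x₀` and the
`N`-th one is bounded by `M`, then `|f x| ≤ M * |x - x₀| ^ N / N!`. -/
theorem abs_le_of_iteratedDerivWithin_eq_zero {s : Set ℝ} (hs : Convex ℝ s)
    (hu : UniqueDiffOn ℝ s) {f : ℝ → ℝ} {N : ℕ} (hN : 0 < N) (hf : ContDiffOn ℝ N f s) {M : ℝ}
    (hM : ∀ y ∈ s, |iteratedDerivWithin N f s y| ≤ M) {x₀ x : ℝ} (hx₀ : x₀ ∈ s) (hx : x ∈ s)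
    (hvan : ∀ k < N, iteratedDerivWithin k f s x₀ = 0) :
    |f x| ≤ M * |x - x₀| ^ N / N.factorial := by
  rcases eq_or_ne x₀ x with rfl | hne
  · have h0 : f x₀ = 0 := by simpa using hvan 0 hN
    simp [h0, hN.ne']
  obtain ⟨n, rfl⟩ : ∃ n, N = n + 1 := ⟨N - 1, by omega⟩
  have hsub : uIcc x₀ x ⊆ s := hs.ordConnected.uIcc_subset hx₀ hx
  have hu' : UniqueDiffOn ℝ (uIcc x₀ x) := uniqueDiffOn_uIcc hne
  have hres : ∀ k ≤ n + 1, ∀ y ∈ uIcc x₀ x,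
      iteratedDerivWithin k f (uIcc x₀ x) y = iteratedDerivWithin k f s y := by
    intro k hk y hy
    rw [iteratedDerivWithin_eq_iteratedFDerivWithin, iteratedDerivWithin_eq_iteratedFDerivWithin,
      iteratedFDerivWithin_subset hsub hu' hu (hf.of_le (by exact_mod_cast hk)) hy]
  have hf' : ContDiffOn ℝ ((n + 1 : ℕ) : WithTop ℕ∞) f (uIcc x₀ x) := hf.mono hsub
  obtain ⟨y, hy, hxy⟩ := taylor_mean_remainder_lagrange (n := n) hne
    (hf'.of_le (by exact_mod_cast n.le_succ))
    ((hf'.differentiableOn_iteratedDerivWithin (by exact_mod_cast n.lt_succ_self) hu').mono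
      Ioo_subset_Icc_self)
  have hy' : y ∈ uIcc x₀ x := Ioo_subset_Icc_self hy
  have htaylor : taylorWithinEval f n (uIcc x₀ x) x₀ x = 0 := by
    rw [taylor_within_apply]
    refine Finset.sum_eq_zero fun k hk => ?_
    have hk' : k < n + 1 := Finset.mem_range.1 hk
    rw [hres k hk'.le x₀ left_mem_uIcc, hvan k hk', smul_zero]
  rw [htaylor, sub_zero, hres _ le_rfl y hy'] at hxy
  rw [hxy, abs_div, abs_mul, abs_pow, Nat.abs_cast]
  gcongr
  exact hM y (hsub hy')

/-- A point of infinite order vanishing propagates to all points at distance less than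
`1 / (c * e)` under analytic bounds along unboundedly many derivatives. -/
theorem eq_zero_of_analytic_bounds_of_abs_sub_lt {s : Set ℝ} (hs : Convex ℝ s)
    (hu : UniqueDiffOn ℝ s) {f : ℝ → ℝ} (hf : ContDiffOn ℝ (⊤ : ℕ∞) f s) {d : ℕ → ℕ}
    (hdpos : ∀ n, 0 < d n) (hdtop : Tendsto d atTop atTop) {c : ℝ} (hc : 0 < c)
    (hbound : ∀ n, ∀ x ∈ s,
      |iteratedDerivWithin (d n) f s x| ≤ c ^ (d n) * (d n : ℝ) ^ (d n))
    {x₀ x : ℝ} (hx₀ : x₀ ∈ s) (hx : x ∈ s)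
    (hvan : ∀ k : ℕ, iteratedDerivWithin k f s x₀ = 0)
    (hdist : c * Real.exp 1 * |x - x₀| < 1) : f x = 0 := by
  have hle : ∀ n, |f x| ≤ (c * Real.exp 1 * |x - x₀|) ^ d n := by
    intro n
    have hexp : (d n : ℝ) ^ d n / (d n).factorial ≤ Real.exp 1 ^ d n := by
      rw [← Real.exp_nat_mul, mul_one]
      exact Real.pow_div_factorial_le_exp _ (Nat.cast_nonneg _) _
    calc |f x| ≤ c ^ d n * (d n : ℝ) ^ d n * |x - x₀| ^ d n / (d n).factorial :=
          abs_le_of_iteratedDerivWithin_eq_zero hs hu (hdpos n)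
            (hf.of_le (by exact_mod_cast le_top)) (hbound n) hx₀ hx fun k _ => hvan k
      _ = c ^ d n * ((d n : ℝ) ^ d n / (d n).factorial) * |x - x₀| ^ d n := by ring
      _ ≤ c ^ d n * Real.exp 1 ^ d n * |x - x₀| ^ d n := by gcongr
      _ = (c * Real.exp 1 * |x - x₀|) ^ d n := by rw [mul_pow, mul_pow]
  have hlim : Tendsto (fun n => (c * Real.exp 1 * |x - x₀|) ^ d n) atTop (nhds 0) :=
    (tendsto_pow_atTop_nhds_zero_of_lt_one (by positivity) hdist).comp hdtop
  exact abs_nonpos_iff.1 (ge_of_tendsto' hlim hle)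

/-- **Proposition 1.** If a smooth `f` on `[a,b]` satisfies
`max |f^(d n)| ≤ c^(d n) * (d n)^(d n)` along an increasing divergent sequence `d`
and vanishes of infinite order at a point `x₀ ∈ [a,b]`, then `f ≡ 0` on `[a,b]`. -/
theorem quasianalyticity_of_analytic_bounds
    (a b : ℝ) (hab : a < b)
    (f : ℝ → ℝ) (hf : ContDiffOn ℝ (⊤ : ℕ∞) f (Icc a b))
    (d : ℕ → ℕ) (hdpos : ∀ n, 0 < d n) (hdmono : StrictMono d)
    (hdtop : Tendsto d atTop atTop)
    (c : ℝ) (hc : 0 < c)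
    (hbound : ∀ n, ∀ x ∈ Icc a b,
      |iteratedDerivWithin (d n) f (Icc a b) x| ≤ c ^ (d n) * (d n : ℝ) ^ (d n))
    (x₀ : ℝ) (hx₀ : x₀ ∈ Icc a b)
    (hvan : ∀ k : ℕ, iteratedDerivWithin k f (Icc a b) x₀ = 0) :
    ∀ x ∈ Icc a b, f x = 0 := by
  have hs : Convex ℝ (Icc a b) := convex_Icc a b
  have hu : UniqueDiffOn ℝ (Icc a b) := uniqueDiffOn_Icc hab
  obtain ⟨δ, hδ, hδc⟩ : ∃ δ : ℝ, 0 < δ ∧ c * Real.exp 1 * δ < 1 := by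
    refine ⟨1 / (2 * (c * Real.exp 1)), by positivity, ?_⟩
    have : c * Real.exp 1 ≠ 0 := by positivity
    field_simp
    norm_num
  have hstep : ∀ y ∈ Icc a b, (∀ k, iteratedDerivWithin k f (Icc a b) y = 0) →
      ∀ x ∈ Icc a b, |x - y| ≤ δ → ∀ k, iteratedDerivWithin k f (Icc a b) x = 0 := by
    intro y hy hvany x hx hxy k
    have hlt : c * Real.exp 1 * |x - y| < 1 := lt_of_le_of_lt (by gcongr) hδc
    have hcont : Continuous fun z : ℝ => c * Real.exp 1 * |z - y| := by fun_prop
    have hev : f =ᶠ[nhdsWithin x (Icc a b)] fun _ => 0 := by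
      filter_upwards [self_mem_nhdsWithin,
        mem_nhdsWithin_of_mem_nhds (hcont.continuousAt.eventually_lt_const hlt)] with z hz hzy
      exact eq_zero_of_analytic_bounds_of_abs_sub_lt hs hu hf hdpos hdtop hc hbound hy hz hvany hzy
    rw [hev.iteratedDerivWithin_eq (hev.self_of_nhdsWithin hx), iteratedDerivWithin_fun_const_zero]
  have hind : ∀ n : ℕ, ∀ x ∈ Icc a b, |x - x₀| ≤ n * δ →
      ∀ k, iteratedDerivWithin k f (Icc a b) x = 0 := by
    intro n
    induction n with
    | zero =>
      intro x _ hxn k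
      have hx : x - x₀ = 0 := by simpa using hxn
      rw [sub_eq_zero.1 hx, hvan]
    | succ n ih =>
      intro x hx hxn
      push_cast at hxn
      have hn : (0 : ℝ) < n + 1 := by positivity
      have hle : |x - x₀| / (n + 1) ≤ δ := by rwa [div_le_iff₀' hn]
      have hmem : x₀ + (n / (n + 1) : ℝ) • (x - x₀) ∈ Icc a b :=
        hs.add_smul_sub_mem hx₀ hx ⟨by positivity, by rw [div_le_one hn]; linarith⟩
      refine hstep _ hmem (ih _ hmem ?_) x hx ?_
      · rw [add_sub_cancel_left, smul_eq_mul, abs_mul, abs_of_nonneg (by positivity)]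
        calc (n / (n + 1) : ℝ) * |x - x₀| = n * (|x - x₀| / (n + 1)) := by ring
          _ ≤ n * δ := by gcongr
      · have : x - (x₀ + (n / (n + 1) : ℝ) • (x - x₀)) = (x - x₀) / (n + 1) := by
          rw [smul_eq_mul]
          field_simp
          ring
        rwa [this, abs_div, abs_of_pos hn]
  intro x hx
  obtain ⟨n, hn⟩ := exists_nat_ge (|x - x₀| / δ)
  simpa using hind n x hx ((div_le_iff₀ hδ).1 hn) 0
end

section
/- Let a < b and let (M_n)_{n≥0} be an arbitrary sequence of positive real numbers such that limsup_{n→∞} M_n^{1/n} = +∞. Then there exist a strictly increasing sequence of positive integers (d_n)_{n≥0} tending to infinity and a function f ∈ C^∞([a,b]) such that max_{x∈[a,b]} |f^{(d_n)}(x)| ≤ M_{d_n} for every n, yet f does not belong to the Denjoy–Carleman class C^M([a,b]); that is, for every K > 0 there exists n ≥ 0 with max_{x∈[a,b]} |f^{(n)}(x)| > K^{n+1} M_n. -/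
open Set Filter

/-- The `j`-th derivative of `x ↦ c * (cos (w * (x - a)) + sin (w * (x - a)))`. -/
noncomputable def waveDeriv (c w a : ℝ) (j : ℕ) (x : ℝ) : ℝ :=
  c * w ^ j * (Real.cos (w * (x - a) + j * (Real.pi / 2)) +
    Real.sin (w * (x - a) + j * (Real.pi / 2)))

lemma contDiff_waveDeriv (c w a : ℝ) (j : ℕ) {n : WithTop ℕ∞} :
    ContDiff ℝ n (waveDeriv c w a j) := by
  unfold waveDeriv
  fun_prop

lemma deriv_waveDeriv (c w a : ℝ) (j : ℕ) :
    deriv (waveDeriv c w a j) = waveDeriv c w a (j + 1) := by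
  funext x
  have hphase : HasDerivAt (fun y : ℝ => w * (y - a) + j * (Real.pi / 2)) w x := by
    simpa using (((hasDerivAt_id x).sub_const a).const_mul w).add_const (j * (Real.pi / 2))
  have hwave := (hphase.cos.add hphase.sin).const_mul (c * w ^ j)
  refine hwave.deriv.trans ?_
  have harg : w * (x - a) + ((j + 1 : ℕ) : ℝ) * (Real.pi / 2) =
      w * (x - a) + j * (Real.pi / 2) + Real.pi / 2 := by
    push_cast
    ring
  rw [waveDeriv, harg, Real.cos_add_pi_div_two, Real.sin_add_pi_div_two]
  ring

lemma iteratedDeriv_waveDeriv_zero (c w a : ℝ) (j : ℕ) :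
    iteratedDeriv j (waveDeriv c w a 0) = waveDeriv c w a j := by
  induction j with
  | zero => exact iteratedDeriv_zero
  | succ j ih => rw [iteratedDeriv_succ, ih, deriv_waveDeriv]

lemma abs_waveDeriv_le {c w : ℝ} (hc : 0 ≤ c) (hw : 0 ≤ w) (a : ℝ) (j : ℕ) (x : ℝ) :
    |waveDeriv c w a j x| ≤ 2 * (c * w ^ j) := by
  have htrig (t : ℝ) : |Real.cos t + Real.sin t| ≤ 2 :=
    (abs_add_le _ _).trans (by linarith [Real.abs_cos_le_one t, Real.abs_sin_le_one t])
  have hcw : 0 ≤ c * w ^ j := by positivity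
  rw [waveDeriv, abs_mul, abs_of_nonneg hcw, mul_comm 2]
  exact mul_le_mul_of_nonneg_left (htrig _) hcw

lemma abs_cos_add_sin_nat_mul_pi_div_two (j : ℕ) :
    |Real.cos (j * (Real.pi / 2)) + Real.sin (j * (Real.pi / 2))| = 1 := by
  have hdouble := Real.sin_two_mul (j * (Real.pi / 2))
  rw [show 2 * ((j : ℝ) * (Real.pi / 2)) = j * Real.pi by ring, Real.sin_nat_mul_pi] at hdouble
  rw [← sq_eq_sq₀ (abs_nonneg _) zero_le_one, sq_abs]
  nlinarith [Real.sin_sq_add_cos_sq (j * (Real.pi / 2))]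

lemma norm_iteratedFDeriv_waveDeriv_zero_le {c w : ℝ} (hc : 0 ≤ c) (hw : 0 ≤ w) (a : ℝ)
    (j : ℕ) (x : ℝ) : ‖iteratedFDeriv ℝ j (waveDeriv c w a 0) x‖ ≤ 2 * (c * w ^ j) := by
  rw [norm_iteratedFDeriv_eq_norm_iteratedDeriv, iteratedDeriv_waveDeriv_zero]
  exact abs_waveDeriv_le hc hw a j x

lemma contDiff_tsum_waveDeriv {c w : ℕ → ℝ} (hc : ∀ k, 0 ≤ c k) (hw : ∀ k, 0 ≤ w k)
    (hsum : ∀ j : ℕ, Summable fun k => c k * w k ^ j) (a : ℝ) :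
    ContDiff ℝ (⊤ : ℕ∞) fun x => ∑' k, waveDeriv (c k) (w k) a 0 x :=
  contDiff_tsum (fun k => contDiff_waveDeriv (c k) (w k) a 0)
    (fun j _ => (hsum j).mul_left 2)
    fun j k x _ => norm_iteratedFDeriv_waveDeriv_zero_le (hc k) (hw k) a j x

lemma iteratedDeriv_tsum_waveDeriv {c w : ℕ → ℝ} (hc : ∀ k, 0 ≤ c k) (hw : ∀ k, 0 ≤ w k)
    (hsum : ∀ j : ℕ, Summable fun k => c k * w k ^ j) (a : ℝ) (j : ℕ) (x : ℝ) :
    iteratedDeriv j (fun y => ∑' k, waveDeriv (c k) (w k) a 0 y) x =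
      ∑' k, waveDeriv (c k) (w k) a j x := by
  have hbound (i k : ℕ) (y : ℝ) := norm_iteratedFDeriv_waveDeriv_zero_le (hc k) (hw k) a i y
  rw [iteratedDeriv_eq_iteratedFDeriv, iteratedFDeriv_tsum_apply (N := ⊤)
    (fun k => contDiff_waveDeriv (c k) (w k) a 0) (fun i _ => (hsum i).mul_left 2)
    (fun i k y _ => hbound i k y) le_top, ContinuousMultilinearMap.tsum_eval]
  · simp_rw [← iteratedDeriv_eq_iteratedFDeriv, iteratedDeriv_waveDeriv_zero]
  · exact Summable.of_norm_bounded ((hsum j).mul_left 2) fun k => hbound j k x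

lemma abs_tsum_waveDeriv_le {c w : ℕ → ℝ} (hc : ∀ k, 0 ≤ c k) (hw : ∀ k, 0 ≤ w k)
    (hsum : ∀ j : ℕ, Summable fun k => c k * w k ^ j) (a : ℝ) (j : ℕ) (x : ℝ) :
    |∑' k, waveDeriv (c k) (w k) a j x| ≤ 2 * ∑' k, c k * w k ^ j := by
  rw [← tsum_mul_left, ← Real.norm_eq_abs]
  exact tsum_of_norm_bounded ((hsum j).mul_left 2).hasSum
    fun k => abs_waveDeriv_le (hc k) (hw k) a j x

/-- At the base point all terms of the series have the same sign, so there is no cancellation. -/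
lemma abs_tsum_waveDeriv_self {c w : ℕ → ℝ} (hc : ∀ k, 0 ≤ c k) (hw : ∀ k, 0 ≤ w k)
    (a : ℝ) (j : ℕ) :
    |∑' k, waveDeriv (c k) (w k) a j a| = ∑' k, c k * w k ^ j := by
  simp only [waveDeriv, sub_self, mul_zero, zero_add]
  rw [tsum_mul_right, abs_mul, abs_cos_add_sin_nat_mul_pi_div_two, mul_one, abs_of_nonneg]
  exact tsum_nonneg fun k => mul_nonneg (hc k) (pow_nonneg (hw k) j)

lemma exists_frequency {M : ℕ → ℝ} (hMpos : ∀ n, 0 < M n) (d : ℕ) :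
    ∃ w : ℝ, 1 ≤ w ∧ (∀ j < d, M d ≤ w * M j) ∧
      (d + 1 : ℝ) ^ (d + 2) * M (d + 1) < 1 / 4 * (1 / 2) ^ d * M d * w := by
  have hdominate : ∀ᶠ w : ℝ in atTop, ∀ j ∈ Finset.range d, M d ≤ w * M j := by
    rw [Filter.eventually_all_finset]
    exact fun j _ => (tendsto_id.atTop_mul_const (hMpos j)).eventually_ge_atTop _
  have hcoef : (0 : ℝ) < 1 / 4 * (1 / 2) ^ d * M d := mul_pos (by positivity) (hMpos d)
  have hlarge := (tendsto_id.const_mul_atTop hcoef).eventually_gt_atTop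
    ((d + 1 : ℝ) ^ (d + 2) * M (d + 1))
  obtain ⟨w, hw_one, hw_dom, hw_large⟩ :=
    ((eventually_ge_atTop 1).and (hdominate.and hlarge)).exists
  exact ⟨w, hw_one, fun j hj => hw_dom j (Finset.mem_range.2 hj), hw_large⟩

lemma exists_strictMono_sparse {M w : ℕ → ℝ} (hMpos : ∀ n, 0 < M n) (hw : ∀ n, 1 ≤ w n)
    (hlimsup : ∀ C : ℝ, ∃ᶠ n : ℕ in atTop, C < (M n) ^ ((1 : ℝ) / (n : ℝ))) :
    ∃ d : ℕ → ℕ, (∀ n, 0 < d n) ∧ StrictMono d ∧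
      ∀ k n, k < n → M (d k) * w (d k) ^ d n ≤ M (d n) * w (d k) ^ d k := by
  obtain ⟨d, hpos, hd⟩ := exists_seq_of_forall_finset_exists (fun n : ℕ => 0 < n)
    (fun j n => j < n ∧ M j * w j ^ n ≤ M n * w j ^ j) (by
      intro s _
      set C : ℝ := ∑ j ∈ s, w j * (1 + M j) with hC
      have hterm (j : ℕ) : 0 ≤ w j * (1 + M j) := by
        have := hMpos j
        have := hw j
        positivity
      obtain ⟨n, hn, hn_gt⟩ :=
        ((hlimsup C).and_eventually (eventually_gt_atTop (s.sup id))).exists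
      have hn_pos : 0 < n := by lia
      have hCn : C ^ n ≤ M n := by
        calc C ^ n ≤ (M n ^ ((1 : ℝ) / n)) ^ n :=
              pow_le_pow_left₀ (Finset.sum_nonneg fun j _ => hterm j) hn.le n
          _ = M n := by
              rw [one_div, Real.rpow_inv_natCast_pow (hMpos n).le hn_pos.ne']
      refine ⟨n, hn_pos, fun j hj => ⟨(Finset.le_sup (f := id) hj).trans_lt hn_gt, ?_⟩⟩
      have hjC : w j * (1 + M j) ≤ C := Finset.single_le_sum (fun i _ => hterm i) hj
      have hwj : 0 ≤ w j := zero_le_one.trans (hw j)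
      have hMj := hMpos j
      calc M j * w j ^ n ≤ (1 + M j) ^ n * w j ^ n := by
            gcongr
            exact (by linarith : M j ≤ 1 + M j).trans
              (le_self_pow₀ (by linarith) hn_pos.ne')
        _ = (w j * (1 + M j)) ^ n := by rw [mul_pow, mul_comm]
        _ ≤ C ^ n := pow_le_pow_left₀ (hterm j) hjC n
        _ ≤ M n := hCn
        _ ≤ M n * w j ^ j := le_mul_of_one_le_right (hMpos n).le (one_le_pow₀ (hw j)))
  exact ⟨d, hpos, fun k n h => (hd k n h).1, fun k n h => (hd k n h).2⟩

lemma mul_pow_le_mul_pow_of_le_mul {x y w : ℝ} (hy : 0 ≤ y) (hw : 1 ≤ w) (h : x ≤ w * y)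
    {m n : ℕ} (hmn : m < n) : x * w ^ m ≤ y * w ^ n := by
  have hw0 : 0 ≤ w := zero_le_one.trans hw
  calc x * w ^ m ≤ w * y * w ^ m := by gcongr
    _ = y * w ^ (m + 1) := by ring
    _ ≤ y * w ^ n := by
        gcongr
        exact hmn

/-- **Theorem 2.** If `limsup M n ^ (1/n) = +∞` (stated equivalently: `M n ^ (1/n)`
exceeds every constant frequently), then there are an increasing divergent sequence `d`
of positive integers and a smooth function `f` on `[a,b]` with
`max |f^(d n)| ≤ M (d n)` for all `n`, but `f ∉ C^M([a,b])`. -/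
theorem counterexample_without_gap_condition
    (a b : ℝ) (hab : a < b)
    (M : ℕ → ℝ) (hMpos : ∀ n, 0 < M n)
    (hlimsup : ∀ C : ℝ, ∃ᶠ n : ℕ in atTop, C < (M n) ^ ((1 : ℝ) / (n : ℝ))) :
    ∃ (d : ℕ → ℕ) (f : ℝ → ℝ),
      (∀ n, 0 < d n) ∧ StrictMono d ∧ Tendsto d atTop atTop ∧
      ContDiffOn ℝ (⊤ : ℕ∞) f (Icc a b) ∧
      (∀ n, ∀ x ∈ Icc a b, |iteratedDerivWithin (d n) f (Icc a b) x| ≤ M (d n)) ∧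
      (∀ K > (0 : ℝ), ∃ n : ℕ, ∃ x ∈ Icc a b,
        K ^ (n + 1) * M n < |iteratedDerivWithin n f (Icc a b) x|) := by
  choose w hw_one hw_dom hw_large using exists_frequency hMpos
  obtain ⟨d, hd_pos, hd_mono, hd_sparse⟩ := exists_strictMono_sparse hMpos hw_one hlimsup
  have hw_pos (k : ℕ) : 0 < w k := zero_lt_one.trans_le (hw_one k)
  set c : ℕ → ℝ := fun k => 1 / 4 * (1 / 2) ^ k * (M (d k) / w (d k) ^ d k) with hc_def
  have hc (k : ℕ) : 0 ≤ c k := by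
    have := hMpos (d k)
    have := hw_pos (d k)
    positivity
  have hv (k : ℕ) : 0 ≤ w (d k) := (hw_pos _).le
  have hratio (n k : ℕ) : M (d k) / w (d k) ^ d k * w (d k) ^ d n ≤ M (d n) := by
    rw [div_mul_eq_mul_div, div_le_iff₀ (pow_pos (hw_pos _) _)]
    rcases lt_trichotomy k n with h | rfl | h
    · exact hd_sparse k n h
    · exact le_rfl
    · exact mul_pow_le_mul_pow_of_le_mul (hMpos _).le (hw_one _)
        (hw_dom _ _ (hd_mono h)) (hd_mono h)
  have hterm (n k : ℕ) : c k * w (d k) ^ d n ≤ 1 / 4 * M (d n) * (1 / 2) ^ k := by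
    calc c k * w (d k) ^ d n
        = 1 / 4 * (1 / 2) ^ k * (M (d k) / w (d k) ^ d k * w (d k) ^ d n) := by
          rw [hc_def]
          ring
      _ ≤ 1 / 4 * (1 / 2) ^ k * M (d n) := by
          gcongr
          exact hratio n k
      _ = 1 / 4 * M (d n) * (1 / 2) ^ k := by ring
  have hgeom (n : ℕ) : HasSum (fun k : ℕ => 1 / 4 * M (d n) * (1 / 2) ^ k) (M (d n) / 2) := by
    rw [show M (d n) / 2 = 1 / 4 * M (d n) * 2 by ring]
    exact hasSum_geometric_two.mul_left _
  have hsum_d (n : ℕ) : Summable fun k => c k * w (d k) ^ d n :=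
    (hgeom n).summable.of_nonneg_of_le
      (fun k => mul_nonneg (hc k) (pow_nonneg (hv k) _)) (hterm n)
  have hsum (j : ℕ) : Summable fun k => c k * w (d k) ^ j :=
    (hsum_d j).of_nonneg_of_le (fun k => mul_nonneg (hc k) (pow_nonneg (hv k) _))
      fun k => mul_le_mul_of_nonneg_left
        (pow_le_pow_right₀ (hw_one _) (hd_mono.le_apply)) (hc k)
  have hsmooth := contDiff_tsum_waveDeriv hc hv hsum a
  have hderiv (j : ℕ) {x : ℝ} (hx : x ∈ Icc a b) :
      iteratedDerivWithin j (fun y => ∑' k, waveDeriv (c k) (w (d k)) a 0 y) (Icc a b) x =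
        ∑' k, waveDeriv (c k) (w (d k)) a j x := by
    rw [iteratedDerivWithin_eq_iteratedDeriv (uniqueDiffOn_Icc hab)
      (hsmooth.of_le (mod_cast le_top)).contDiffAt hx,
      iteratedDeriv_tsum_waveDeriv hc hv hsum]
  refine ⟨d, _, hd_pos, hd_mono, hd_mono.tendsto_atTop, hsmooth.contDiffOn, ?_, ?_⟩
  · intro n x hx
    rw [hderiv _ hx]
    have hle : ∑' k, c k * w (d k) ^ d n ≤ M (d n) / 2 :=
      (hgeom n).tsum_eq ▸ (hsum_d n).tsum_le_tsum (hterm n) (hgeom n).summable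
    linarith [abs_tsum_waveDeriv_le hc hv hsum a (d n) x]
  · intro K hK
    obtain ⟨k, hk⟩ := exists_nat_ge K
    have hkd : k ≤ d k := hd_mono.le_apply
    have hKd : K ≤ (d k : ℝ) + 1 := by
      have : (k : ℝ) ≤ d k := mod_cast hkd
      linarith
    refine ⟨d k + 1, a, left_mem_Icc.2 hab.le, ?_⟩
    rw [hderiv _ (left_mem_Icc.2 hab.le), abs_tsum_waveDeriv_self hc hv]
    have hM := hMpos (d k)
    have hM' := hMpos (d k + 1)
    have hwk := hw_pos (d k)
    calc K ^ (d k + 1 + 1) * M (d k + 1)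
        ≤ ((d k : ℝ) + 1) ^ (d k + 2) * M (d k + 1) := by gcongr
      _ < 1 / 4 * (1 / 2) ^ d k * M (d k) * w (d k) := hw_large (d k)
      _ ≤ 1 / 4 * (1 / 2) ^ k * M (d k) * w (d k) := by
          gcongr ?_ * _ * _
          exact mul_le_mul_of_nonneg_left
            (pow_le_pow_of_le_one (by norm_num) (by norm_num) hkd) (by norm_num)
      _ = c k * w (d k) ^ (d k + 1) := by
          rw [hc_def]
          field_simp
          ring
      _ ≤ ∑' i, c i * w (d i) ^ (d k + 1) :=
          (hsum _).le_tsum k fun i _ => mul_nonneg (hc i) (pow_nonneg (hv i) _)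
end

section
/- (Cartan–Gorny inequality) Let a < b, let m ≥ 2 be an integer, and let g : [a,b] → ℝ be m times differentiable with G_ℓ := sup_{x∈[a,b]} |g^{(ℓ)}(x)| finite for ℓ = 0 and ℓ = m. Then for every integer k with 1 ≤ k ≤ m−1, G_k ≤ 2 · (e^2 m / k)^k · G_0^{1−k/m} · ( max{ m! · G_0 · (2/(b−a))^m , G_m } )^{k/m}. -/
open Set

open Polynomial in
theorem abs_eval_iterate_derivative_one_le {n : ℕ} {P : ℝ[X]} {B : ℝ} (hB : 0 < B)
    (hPdeg : P.degree ≤ n) (hP : ∀ x ∈ Icc (-1 : ℝ) 1, |P.eval x| ≤ B) (k : ℕ) :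
    |(derivative^[k] P).eval 1| ≤ B * (derivative^[k] (Chebyshev.T ℝ n)).eval 1 := by
  have key (c : ℝ) (hc : |c| = B⁻¹) :
      c * (derivative^[k] P).eval 1 ≤ (derivative^[k] (Chebyshev.T ℝ n)).eval 1 := by
    have h := Chebyshev.eval_iterate_derivative_le_of_forall_abs_le_one (n := n) (P := c • P)
      (k := k) (x := 1) le_rfl ((degree_smul_le c P).trans hPdeg) (fun x hx => by
        rw [eval_smul, smul_eq_mul, abs_mul, hc, inv_mul_le_iff₀ hB, mul_one]
        exact hP x hx)
    rwa [iterate_derivative_smul, eval_smul, smul_eq_mul] at h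
  have h₁ := key B⁻¹ (abs_of_pos (inv_pos.2 hB))
  have h₂ := key (-B⁻¹) (by rw [abs_neg, abs_of_pos (inv_pos.2 hB)])
  rw [neg_mul, ← mul_neg] at h₂
  rw [inv_mul_le_iff₀ hB] at h₁ h₂
  exact abs_le'.2 ⟨h₁, h₂⟩

theorem two_pow_mul_factorial_mul_prod_odd (k : ℕ) :
    2 ^ k * k.factorial * ∏ l ∈ Finset.range k, (2 * l + 1) = (2 * k).factorial := by
  induction k with
  | zero => simp
  | succ k ih =>
    rw [Finset.prod_range_succ, show 2 * (k + 1) = 2 * k + 1 + 1 by ring, Nat.factorial_succ,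
      Nat.factorial_succ, Nat.factorial_succ (2 * k), ← ih]
    ring

theorem succ_pow_le_exp_mul_pow (x : ℕ) : ((x : ℝ) + 1) ^ x ≤ Real.exp 1 * (x : ℝ) ^ x := by
  rcases Nat.eq_zero_or_pos x with rfl | hx
  · simp
  have hx' : (0 : ℝ) < x := by exact_mod_cast hx
  have h : (1 + (x : ℝ)⁻¹) ^ x ≤ Real.exp 1 := by
    calc (1 + (x : ℝ)⁻¹) ^ x ≤ Real.exp (x : ℝ)⁻¹ ^ x := by
          gcongr
          linarith [Real.add_one_le_exp (x : ℝ)⁻¹]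
      _ = Real.exp 1 := by rw [← Real.exp_nat_mul, mul_inv_cancel₀ hx'.ne']
  calc ((x : ℝ) + 1) ^ x = (1 + (x : ℝ)⁻¹) ^ x * (x : ℝ) ^ x := by
        rw [← mul_pow]; congr 1; field_simp
    _ ≤ _ := by gcongr

theorem add_pow_mul_factorial_le (k n : ℕ) :
    ((k + n : ℕ) : ℝ) ^ (k + n) * k.factorial ≤
      Real.exp 1 ^ n * (k : ℝ) ^ k * (k + n).factorial := by
  induction n with
  | zero => simp
  | succ n ih =>
    rw [← add_assoc, Nat.factorial_succ]
    calc ((k + n + 1 : ℕ) : ℝ) ^ (k + n + 1) * k.factorial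
        = ((k + n + 1 : ℕ) : ℝ) * k.factorial * (((k + n : ℕ) : ℝ) + 1) ^ (k + n) := by
          push_cast; ring
      _ ≤ ((k + n + 1 : ℕ) : ℝ) * k.factorial * (Real.exp 1 * ((k + n : ℕ) : ℝ) ^ (k + n)) := by
          gcongr
          exact succ_pow_le_exp_mul_pow _
      _ = ((k + n + 1 : ℕ) : ℝ) * Real.exp 1 * (((k + n : ℕ) : ℝ) ^ (k + n) * k.factorial) := by
          ring
      _ ≤ ((k + n + 1 : ℕ) : ℝ) * Real.exp 1 *
            (Real.exp 1 ^ n * (k : ℝ) ^ k * (k + n).factorial) := by gcongr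
      _ = _ := by push_cast; ring

theorem two_mul_pow_le_exp_mul_prod_odd (k : ℕ) :
    (2 * (k : ℝ)) ^ k ≤ Real.exp 1 ^ k * ∏ l ∈ Finset.range k, (2 * (l : ℝ) + 1) := by
  rcases Nat.eq_zero_or_pos k with rfl | hk
  · simp
  have hk' : (0 : ℝ) < k := by exact_mod_cast hk
  have h := add_pow_mul_factorial_le k k
  rw [← two_mul, ← two_pow_mul_factorial_mul_prod_odd] at h
  push_cast at h
  have hpos : 0 < (2 * (k : ℝ)) ^ k * k.factorial := by positivity
  refine le_of_mul_le_mul_right ?_ hpos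
  calc (2 * (k : ℝ)) ^ k * ((2 * (k : ℝ)) ^ k * k.factorial)
      = (2 * (k : ℝ)) ^ (2 * k) * k.factorial := by ring
    _ ≤ _ := h
    _ = _ := by ring

open Polynomial in
theorem eval_iterate_derivative_T_one_le {n k : ℕ} (hk : 1 ≤ k) (hkn : k ≤ n) :
    (derivative^[k] (Chebyshev.T ℝ n)).eval 1 ≤ (Real.exp 1 * n ^ 2 / (2 * k)) ^ k := by
  have hk' : (0 : ℝ) < k := by exact_mod_cast hk
  have h := Chebyshev.iterate_derivative_T_eval_one (R := ℝ) n k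
  push_cast at h
  have hprod : ∏ l ∈ Finset.range k, ((n : ℝ) ^ 2 - (l : ℝ) ^ 2) ≤ ((n : ℝ) ^ 2) ^ k := by
    calc _ ≤ ∏ _l ∈ Finset.range k, (n : ℝ) ^ 2 := by
          refine Finset.prod_le_prod (fun l hl => ?_) fun l _ => by nlinarith
          have : (l : ℝ) ≤ n := by exact_mod_cast (Finset.mem_range.1 hl).le.trans hkn
          exact sub_nonneg.2 (by gcongr)
      _ = _ := by simp
  have hodd : 0 < ∏ l ∈ Finset.range k, (2 * (l : ℝ) + 1) :=
    Finset.prod_pos fun _ _ => by positivity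
  refine le_of_mul_le_mul_left ((h.trans_le hprod).trans ?_) hodd
  calc ((n : ℝ) ^ 2) ^ k = (2 * (k : ℝ)) ^ k * ((n : ℝ) ^ 2 / (2 * k)) ^ k := by
        rw [← mul_pow, mul_div_cancel₀ _ (by positivity)]
    _ ≤ (Real.exp 1 ^ k * ∏ l ∈ Finset.range k, (2 * (l : ℝ) + 1)) *
          ((n : ℝ) ^ 2 / (2 * k)) ^ k := by
        gcongr
        exact two_mul_pow_le_exp_mul_prod_odd k
    _ = _ := by rw [mul_div_assoc, mul_pow]; ring

theorem abs_sub_taylor_sum_le {h M : ℝ} (m : ℕ) (f : ℕ → ℝ → ℝ)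
    (hf : ∀ j < m, ∀ x ∈ Icc 0 h, HasDerivWithinAt (f j) (f (j + 1) x) (Icc 0 h) x)
    (hM : ∀ x ∈ Icc 0 h, |f m x| ≤ M) :
    ∀ x ∈ Icc 0 h, |f 0 x - ∑ j ∈ Finset.range m, f j 0 / j.factorial * x ^ j| ≤
      M * x ^ m / m.factorial := by
  induction m generalizing f with
  | zero => simpa using hM
  | succ m ih =>
    have ih' := ih (fun j => f (j + 1)) (fun j hj => hf (j + 1) (by omega)) hM
    have hsum (x : ℝ) : HasDerivAt
        (fun x => ∑ j ∈ Finset.range (m + 1), f j 0 / j.factorial * x ^ j)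
        (∑ j ∈ Finset.range m, f (j + 1) 0 / j.factorial * x ^ j) x := by
      have := HasDerivAt.fun_sum (u := Finset.range (m + 1)) fun j _ =>
        (hasDerivAt_pow j x).const_mul (f j 0 / (j.factorial : ℝ))
      refine this.congr_deriv ?_
      rw [Finset.sum_range_succ']
      simp only [Nat.cast_zero, zero_mul, mul_zero, add_zero]
      refine Finset.sum_congr rfl fun j _ => ?_
      have : (j.factorial : ℝ) ≠ 0 := by positivity
      rw [Nat.factorial_succ]
      push_cast
      field_simp
    refine image_norm_le_of_norm_deriv_right_le_deriv_boundary
      (f' := fun x => f 1 x - ∑ j ∈ Finset.range m, f (j + 1) 0 / j.factorial * x ^ j)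
      (B' := fun x => M * x ^ m / m.factorial)
      (fun x hx => ((hf 0 (by omega) x hx).continuousWithinAt).sub
        (hsum x).continuousAt.continuousWithinAt) (fun x hx => ?_) ?_ (fun x => ?_) ?_
    · refine HasDerivWithinAt.sub ?_ (hsum x).hasDerivWithinAt
      exact (hf 0 (by omega) x ⟨hx.1, hx.2.le⟩).mono_of_mem_nhdsWithin
        (Icc_mem_nhdsGE_of_mem hx)
    · simp [Finset.sum_range_succ']
    · have := ((hasDerivAt_pow (m + 1) x).const_mul M).div_const ((m + 1).factorial : ℝ)
      refine this.congr_deriv ?_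
      have : (m.factorial : ℝ) ≠ 0 := by positivity
      rw [Nat.factorial_succ]
      push_cast
      field_simp
    · exact fun x hx => ih' x ⟨hx.1, hx.2.le⟩

open Polynomial in
theorem eval_iterate_derivative_sum_X_sub_C_pow {m k : ℕ} (hk : k < m) (c : ℕ → ℝ) (r : ℝ) :
    (derivative^[k] (∑ j ∈ Finset.range m, c j • (X - C r) ^ j)).eval r =
      k.factorial * c k := by
  rw [← factorial_smul_hasseDeriv, LinearMap.smul_apply, eval_smul, ← taylor_coeff]
  simp [taylor_apply, finsetSum_coeff, coeff_X_pow, hk]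

open Polynomial in
theorem abs_deriv_left_endpoint_le {h M A : ℝ} (hh : 0 < h) (hA : 0 < A) {m k : ℕ}
    (hkm : k < m) (f : ℕ → ℝ → ℝ)
    (hf : ∀ j < m, ∀ x ∈ Icc 0 h, HasDerivWithinAt (f j) (f (j + 1) x) (Icc 0 h) x)
    (hM : ∀ x ∈ Icc 0 h, |f m x| ≤ M) (hfA : ∀ x ∈ Icc 0 h, |f 0 x| ≤ A)
    (hMA : M * h ^ m / m.factorial ≤ A) :
    |f k 0| ≤ 2 * A * (derivative^[k] (Chebyshev.T ℝ (m - 1 : ℕ))).eval 1 * (2 / h) ^ k := by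
  have hM0 : 0 ≤ M := (abs_nonneg _).trans (hM 0 ⟨le_rfl, hh.le⟩)
  set P : ℝ[X] := ∑ j ∈ Finset.range m, (f j 0 / j.factorial * (-(h / 2)) ^ j) • (X - C 1) ^ j
    with hP
  have hPdeg : P.degree ≤ (m - 1 : ℕ) := by
    refine (degree_sum_le _ _).trans (Finset.sup_le fun j hj => ?_)
    have hj' : j ≤ m - 1 := by have := Finset.mem_range.1 hj; omega
    refine (degree_smul_le _ _).trans ?_
    rw [degree_pow, degree_X_sub_C, nsmul_one]
    exact_mod_cast hj'
  have hPbd : ∀ y ∈ Icc (-1 : ℝ) 1, |P.eval y| ≤ 2 * A := by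
    intro y hy
    have hx : h / 2 * (1 - y) ∈ Icc 0 h :=
      ⟨mul_nonneg (by positivity) (by linarith [hy.2]), by nlinarith [hy.1]⟩
    have heval : P.eval y =
        ∑ j ∈ Finset.range m, f j 0 / j.factorial * (h / 2 * (1 - y)) ^ j := by
      rw [hP, eval_finsetSum]
      refine Finset.sum_congr rfl fun j _ => ?_
      rw [eval_smul, smul_eq_mul, eval_pow, eval_sub, eval_X, eval_C, mul_assoc, ← mul_pow]
      congr 2
      ring
    have hT := abs_sub_taylor_sum_le m f hf hM _ hx
    rw [← heval] at hT
    have hrem : M * (h / 2 * (1 - y)) ^ m / m.factorial ≤ A := by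
      refine le_trans ?_ hMA
      gcongr
      · exact hx.1
      · exact hx.2
    have h0 := hfA _ hx
    rw [abs_le] at hT h0 ⊢
    constructor <;> linarith
  have hmain := abs_eval_iterate_derivative_one_le (by positivity) hPdeg hPbd k
  rw [hP, eval_iterate_derivative_sum_X_sub_C_pow hkm] at hmain
  have hfk : f k 0 = k.factorial * (f k 0 / k.factorial * (-(h / 2)) ^ k) * (-(2 / h)) ^ k := by
    have h1 : (-(h / 2)) ^ k * (-(2 / h)) ^ k = 1 := by
      rw [← mul_pow]
      field_simp
      simp
    have h2 : (k.factorial : ℝ) ≠ 0 := by positivity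
    rw [mul_assoc, mul_assoc, h1]
    field_simp
  rw [hfk, abs_mul, abs_pow, abs_neg, abs_of_pos (div_pos two_pos hh)]
  gcongr

theorem div_exp_one_pow_le_factorial (m : ℕ) :
    ((m : ℝ) / Real.exp 1) ^ m ≤ m.factorial := by
  have h := Real.pow_div_factorial_le_exp (x := m) (by positivity) m
  rw [div_le_iff₀ (by positivity)] at h
  rw [div_pow, div_le_iff₀ (by positivity), ← Real.exp_nat_mul, mul_one, mul_comm]
  exact h

theorem hasDerivWithinAt_iteratedDerivWithin_comp_affine {s t : Set ℝ} {g : ℝ → ℝ} {x₀ σ : ℝ}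
    {j : ℕ} {x : ℝ} (hg : DifferentiableOn ℝ (iteratedDerivWithin j g s) s)
    (ht : MapsTo (fun x => x₀ + σ * x) t s) (hx : x ∈ t) :
    HasDerivWithinAt (fun x => σ ^ j * iteratedDerivWithin j g s (x₀ + σ * x))
      (σ ^ (j + 1) * iteratedDerivWithin (j + 1) g s (x₀ + σ * x)) t x := by
  have h1 := (hg _ (ht hx)).hasDerivWithinAt
  rw [← iteratedDerivWithin_succ] at h1
  have h2 : HasDerivWithinAt (fun x => x₀ + σ * x) σ t x := by
    simpa using ((hasDerivWithinAt_id x t).const_mul σ).const_add x₀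
  exact ((h1.comp x h2 ht).const_mul (σ ^ j)).congr_deriv (by ring)

/-- **Lemma (Cartan–Gorny inequality).** For `g` an `m`-times differentiable function
on `[a,b]` with `G ℓ = sup_{[a,b]} |g^(ℓ)|` finite for `ℓ = 0, m`, and `1 ≤ k ≤ m - 1`,
`G k ≤ 2 (e² m / k)^k G₀^(1 - k/m) (max (m! G₀ (2/(b-a))^m) (G m))^(k/m)`. -/
theorem cartan_gorny_inequality
    (a b : ℝ) (hab : a < b)
    (m : ℕ) (hm : 2 ≤ m)
    (g : ℝ → ℝ)
    (hg : ∀ k : ℕ, k < m →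
      DifferentiableOn ℝ (iteratedDerivWithin k g (Icc a b)) (Icc a b))
    (G : ℕ → ℝ)
    (hG : ∀ l : ℕ, G l = sSup ((fun x => |iteratedDerivWithin l g (Icc a b) x|) '' Icc a b))
    (hG0 : BddAbove ((fun x => |iteratedDerivWithin 0 g (Icc a b) x|) '' Icc a b))
    (hGm : BddAbove ((fun x => |iteratedDerivWithin m g (Icc a b) x|) '' Icc a b))
    (k : ℕ) (hk1 : 1 ≤ k) (hkm : k ≤ m - 1) :
    G k ≤ 2 * (Real.exp 2 * (m : ℝ) / (k : ℝ)) ^ k * (G 0) ^ (1 - (k : ℝ) / (m : ℝ)) *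
      (max ((m.factorial : ℝ) * G 0 * (2 / (b - a)) ^ m) (G m)) ^ ((k : ℝ) / (m : ℝ)) := by
  have hm_ne : m ≠ 0 := by omega
  have hle0 : ∀ x ∈ Icc a b, |iteratedDerivWithin 0 g (Icc a b) x| ≤ G 0 := fun x hx => by
    rw [hG 0]
    exact le_csSup hG0 ⟨x, hx, rfl⟩
  have hlem : ∀ x ∈ Icc a b, |iteratedDerivWithin m g (Icc a b) x| ≤ G m := fun x hx => by
    rw [hG m]
    exact le_csSup hGm ⟨x, hx, rfl⟩
  have hA0 : 0 ≤ G 0 := (abs_nonneg _).trans (hle0 a ⟨le_rfl, hab.le⟩)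
  set M := max ((m.factorial : ℝ) * G 0 * (2 / (b - a)) ^ m) (G m) with hMdef
  have hba : 0 < b - a := sub_pos.2 hab
  have hM0 : 0 ≤ M := le_max_of_le_left (by positivity)
  rw [hG k]
  refine csSup_le ((nonempty_Icc.2 hab.le).image _) ?_
  rintro _ ⟨x₀, hx₀, rfl⟩
  rcases hA0.eq_or_lt with hA | hA
  · have hg0 : EqOn g (fun _ => 0) (Icc a b) := fun x hx => by
      have := hle0 x hx
      rw [← hA, iteratedDerivWithin_zero] at this
      exact abs_nonpos_iff.1 this
    have hz : iteratedDerivWithin k g (Icc a b) x₀ = 0 := by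
      rw [iteratedDerivWithin_congr hg0 hx₀]
      simp
    simp only [hz, abs_zero]
    positivity
  · have hMpos : 0 < M := lt_max_of_lt_left (by positivity)
    obtain ⟨h, hh, hhm⟩ : ∃ h : ℝ, 0 < h ∧ h ^ m = m.factorial * G 0 / M :=
      ⟨(m.factorial * G 0 / M) ^ ((m : ℝ)⁻¹), by positivity,
        Real.rpow_inv_natCast_pow (by positivity) hm_ne⟩
    have hhle : h ≤ (b - a) / 2 := by
      rw [← pow_le_pow_iff_left₀ hh.le (by positivity) hm_ne, hhm, div_le_iff₀ hMpos]
      calc (m.factorial : ℝ) * G 0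
          = ((b - a) / 2) ^ m * (m.factorial * G 0 * (2 / (b - a)) ^ m) := by
            have : ((b - a) / 2) ^ m * (2 / (b - a)) ^ m = 1 := by
              rw [← mul_pow, div_mul_div_cancel₀ two_ne_zero, div_self hba.ne', one_pow]
            linear_combination (-(m.factorial * G 0)) * this
        _ ≤ _ := by
            gcongr
            exact le_max_left _ _
    obtain ⟨σ, hσ, hmaps⟩ : ∃ σ : ℝ, |σ| = 1 ∧
        MapsTo (fun x => x₀ + σ * x) (Icc 0 h) (Icc a b) := by
      rcases le_total x₀ ((a + b) / 2) with hx | hx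
      · exact ⟨1, by simp, fun y hy => ⟨by linarith [hy.1, hx₀.1], by linarith [hy.2]⟩⟩
      · exact ⟨-1, by simp, fun y hy => ⟨by linarith [hy.2], by linarith [hy.1, hx₀.2]⟩⟩
    have hend := abs_deriv_left_endpoint_le (M := M) hh hA (m := m) (k := k) (by omega)
      (fun j x => σ ^ j * iteratedDerivWithin j g (Icc a b) (x₀ + σ * x))
      (fun j hj x hx => hasDerivWithinAt_iteratedDerivWithin_comp_affine (hg j hj) hmaps hx)
      (fun x hx => by
        rw [abs_mul, abs_pow, hσ, one_pow, one_mul]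
        exact (hlem _ (hmaps hx)).trans (le_max_right _ _))
      (fun x hx => by simpa using hle0 _ (hmaps hx))
      (by rw [hhm]; field_simp; rfl)
    simp only [mul_zero, add_zero, abs_mul, abs_pow, hσ, one_pow, one_mul] at hend
    set ρ := (M / G 0) ^ ((m : ℝ)⁻¹) with hρ
    have hρ0 : 0 ≤ ρ := by positivity
    have hρm : ρ ^ m = M / G 0 := Real.rpow_inv_natCast_pow (by positivity) hm_ne
    have hρle : m / Real.exp 1 / h ≤ ρ := by
      rw [← pow_le_pow_iff_left₀ (by positivity) hρ0 hm_ne, hρm, div_pow, hhm]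
      calc ((m : ℝ) / Real.exp 1) ^ m / (m.factorial * G 0 / M)
          ≤ m.factorial / (m.factorial * G 0 / M) := by
            gcongr
            exact div_exp_one_pow_le_factorial m
        _ = M / G 0 := by field_simp
    have hrpow : (G 0) ^ (1 - (k : ℝ) / m) * M ^ ((k : ℝ) / m) = G 0 * ρ ^ k := by
      rw [hρ, ← Real.rpow_natCast, ← Real.rpow_mul (by positivity), inv_mul_eq_div,
        Real.div_rpow hMpos.le hA.le, Real.rpow_sub hA, Real.rpow_one]
      ring
    have hbase : Real.exp 1 * ((m - 1 : ℕ) : ℝ) ^ 2 / (2 * k) * (2 / h) ≤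
        Real.exp 2 * m / k * ρ := by
      have hexp : Real.exp 2 = Real.exp 1 * Real.exp 1 := by rw [← Real.exp_add]; norm_num
      have hm1 : ((m - 1 : ℕ) : ℝ) ≤ m := by exact_mod_cast Nat.sub_le m 1
      calc Real.exp 1 * ((m - 1 : ℕ) : ℝ) ^ 2 / (2 * k) * (2 / h)
          ≤ Real.exp 1 * (m : ℝ) ^ 2 / (2 * k) * (2 / h) := by gcongr
        _ = Real.exp 2 * m / k * (m / Real.exp 1 / h) := by rw [hexp]; field_simp
        _ ≤ _ := by gcongr
    calc |iteratedDerivWithin k g (Icc a b) x₀| ≤ _ := hend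
      _ ≤ 2 * G 0 * (Real.exp 1 * ((m - 1 : ℕ) : ℝ) ^ 2 / (2 * k)) ^ k * (2 / h) ^ k := by
          gcongr
          exact eval_iterate_derivative_T_one_le hk1 hkm
      _ = 2 * G 0 * (Real.exp 1 * ((m - 1 : ℕ) : ℝ) ^ 2 / (2 * k) * (2 / h)) ^ k := by
          rw [mul_pow _ (2 / h)]; ring
      _ ≤ 2 * G 0 * (Real.exp 2 * m / k * ρ) ^ k := by gcongr
      _ = _ := by
          rw [mul_assoc _ ((G 0) ^ _), hrpow, mul_pow]
          ring
end

section
/- Let a < b, let s ≥ 1, and let f : [a,b] → ℝ be C^∞. Suppose there exist a constant c_0 > 0 and a strictly increasing sequence of positive integers (d_n)_{n≥0} tending to infinity with d_{n+1}/d_n ≤ c_0 for all n, such that max_{x∈[a,b]} |f^{(d_n)}(x)| ≤ d_n^{s·d_n} for every n. Then f belongs to the Gevrey class G^s([a,b]); that is, there exists K > 0 such that max_{x∈[a,b]} |f^{(n)}(x)| ≤ K^{n+1} · n^{ns} for all n ≥ 1. -/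
open Set Filter

open Polynomial in
theorem chebyshevT_eval_two_bounds (n : ℕ) :
    0 ≤ (Chebyshev.T ℝ n).eval 2 ∧ (Chebyshev.T ℝ n).eval 2 ≤ (Chebyshev.T ℝ (n + 1)).eval 2 ∧
      (Chebyshev.T ℝ (n + 1)).eval 2 ≤ 4 * (Chebyshev.T ℝ n).eval 2 := by
  induction n with
  | zero => norm_num
  | succ n ih =>
    have h : (Chebyshev.T ℝ ((n : ℤ) + 1 + 1)).eval 2 =
        4 * (Chebyshev.T ℝ (n + 1)).eval 2 - (Chebyshev.T ℝ n).eval 2 := by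
      rw [show (n : ℤ) + 1 + 1 = n + 2 by ring, Chebyshev.T_add_two]
      simp only [eval_sub, eval_mul, eval_X, eval_ofNat]
      norm_num
    push_cast
    rw [h]
    refine ⟨?_, ?_, ?_⟩ <;> linarith [ih.1, ih.2.1, ih.2.2]

open Polynomial in
theorem chebyshevT_eval_two_le (n : ℕ) : (Chebyshev.T ℝ n).eval 2 ≤ 4 ^ n := by
  induction n with
  | zero => norm_num
  | succ n ih =>
    have h := (chebyshevT_eval_two_bounds n).2.2
    push_cast
    rw [pow_succ]
    linarith

open Polynomial in
theorem factorial_mul_taylor_coeff (P : ℝ[X]) (r : ℝ) (k : ℕ) :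
    (k.factorial : ℝ) * (taylor r P).coeff k = (derivative^[k] P).eval r := by
  rw [taylor_coeff, ← factorial_smul_hasseDeriv]
  simp

open Polynomial in
theorem taylor_one_coeff_chebyshevT_nonneg (n k : ℕ) :
    0 ≤ (taylor 1 (Chebyshev.T ℝ n)).coeff k := by
  have h := Chebyshev.eval_iterate_derivative_le_of_forall_abs_le_one (n := n) (P := 0) (k := k)
    le_rfl (by simp) (by simp)
  rw [← factorial_mul_taylor_coeff, ← factorial_mul_taylor_coeff] at h
  simp only [map_zero, coeff_zero, mul_zero] at h
  exact nonneg_of_mul_nonneg_right h (by positivity)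

open Polynomial in
theorem taylor_one_coeff_chebyshevT_le (n k : ℕ) :
    (taylor 1 (Chebyshev.T ℝ n)).coeff k ≤ 4 ^ n := by
  refine le_trans ?_ (chebyshevT_eval_two_le n)
  have h : (Chebyshev.T ℝ n).eval 2 = (taylor 1 (Chebyshev.T ℝ n)).eval 1 := by
    rw [taylor_eval]; norm_num
  rw [h, eval_eq_sum_range' (n := (taylor 1 (Chebyshev.T ℝ n)).natDegree + 1 + k) (by omega)]
  simp only [one_pow, mul_one]
  exact Finset.single_le_sum (f := fun i => (taylor 1 (Chebyshev.T ℝ n)).coeff i)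
    (fun i _ => taylor_one_coeff_chebyshevT_nonneg n i) (Finset.mem_range.2 (by omega))

open Polynomial in
theorem abs_taylor_one_coeff_le {n : ℕ} {P : ℝ[X]} {M : ℝ} (hM : 0 < M) (hdeg : P.degree ≤ n)
    (hP : ∀ t ∈ Icc (-1 : ℝ) 1, |P.eval t| ≤ M) (k : ℕ) :
    |(taylor 1 P).coeff k| ≤ M * 4 ^ n := by
  have key : ∀ c : ℝ, |c| = M⁻¹ → c * (taylor 1 P).coeff k ≤ 4 ^ n := by
    intro c hc
    have hc₀ : c ≠ 0 := abs_pos.1 (hc ▸ inv_pos.2 hM)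
    have h := Chebyshev.eval_iterate_derivative_le_of_forall_abs_le_one (n := n) (P := C c * P)
      (k := k) le_rfl ((degree_C_mul hc₀).le.trans hdeg) (fun t ht => by
        rw [eval_mul, eval_C, abs_mul, hc, inv_mul_le_one₀ hM]
        exact hP t ht)
    rw [← factorial_mul_taylor_coeff, ← factorial_mul_taylor_coeff] at h
    have h' := (le_of_mul_le_mul_left h (by positivity)).trans (taylor_one_coeff_chebyshevT_le n k)
    simpa [taylor_mul] using h'
  have h₁ := key M⁻¹ (abs_of_pos (by positivity))
  have h₂ := key (-M⁻¹) (by rw [abs_neg]; exact abs_of_pos (by positivity))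
  rw [neg_mul] at h₂
  have h₃ : |M⁻¹ * (taylor 1 P).coeff k| ≤ 4 ^ n := abs_le.2 ⟨by linarith, h₁⟩
  rwa [abs_mul, abs_of_pos (inv_pos.2 hM), inv_mul_le_iff₀ hM] at h₃

open Polynomial in
theorem abs_coeff_le_of_forall_mem_unitInterval {n k : ℕ} (hk : k ≤ n) {R : ℝ[X]} {M : ℝ}
    (hM : 0 < M) (hdeg : R.natDegree ≤ n) (hR : ∀ u ∈ Icc (0 : ℝ) 1, |R.eval u| ≤ M) :
    |R.coeff k| ≤ M * 8 ^ n := by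
  set P : ℝ[X] := R.comp (C (1 / 2) + C (-1 / 2) * X) with hPdef
  have hPdeg : P.degree ≤ n := by
    refine degree_le_of_natDegree_le ?_
    rw [hPdef, natDegree_comp]
    calc R.natDegree * _ ≤ R.natDegree * 1 := by
          gcongr
          compute_degree
      _ ≤ n := by simpa using hdeg
  have h := abs_taylor_one_coeff_le hM hPdeg (fun t ht => by
    rw [hPdef, eval_comp]
    refine hR _ ?_
    simp only [eval_add, eval_mul, eval_C, eval_X]
    exact ⟨by linarith [ht.2], by linarith [ht.1]⟩) k
  have hcomp : taylor 1 P = R.comp (C (-1 / 2) * X) := by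
    rw [taylor_apply, hPdef, comp_assoc]
    congr 1
    simp only [add_comp, mul_comp, C_comp, X_comp]
    rw [mul_add, ← C_mul, add_comm (C (-1 / 2) * X), ← add_assoc, ← C_add]
    norm_num
  rw [hcomp, comp_C_mul_X_coeff, abs_mul, abs_pow] at h
  rw [show |(-1 / 2 : ℝ)| = 1 / 2 by rw [abs_of_neg (by norm_num)]; norm_num, one_div, inv_pow,
    ← div_eq_mul_inv, div_le_iff₀ (by positivity)] at h
  calc |R.coeff k| ≤ M * 4 ^ n * 2 ^ k := h
    _ ≤ M * 4 ^ n * 2 ^ n := by gcongr; norm_num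
    _ = M * 8 ^ n := by rw [mul_assoc, ← mul_pow]; norm_num

theorem iteratedDerivWithin_iteratedDerivWithin (p k : ℕ) (f : ℝ → ℝ) (s : Set ℝ) :
    iteratedDerivWithin k (iteratedDerivWithin p f s) s = iteratedDerivWithin (p + k) f s := by
  have h : ∀ (n : ℕ) (g : ℝ → ℝ),
      iteratedDerivWithin n g s = (fun g : ℝ → ℝ => derivWithin g s)^[n] g :=
    fun n g => funext fun x => iteratedDerivWithin_eq_iterate
  rw [h, h p, h, add_comm, Function.iterate_add_apply]

theorem contDiffOn_top_iteratedDerivWithin {f : ℝ → ℝ} {s : Set ℝ} (hs : UniqueDiffOn ℝ s)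
    (hf : ContDiffOn ℝ (⊤ : ℕ∞) f s) (p : ℕ) :
    ContDiffOn ℝ (⊤ : ℕ∞) (iteratedDerivWithin p f s) s := by
  rw [contDiffOn_infty]
  intro n
  have h : ContDiffOn ℝ ((p + n : ℕ) : WithTop ℕ∞) f s := hf.of_le (by exact_mod_cast le_top)
  rw [iteratedDerivWithin_eq_equiv_comp]
  refine (LinearIsometryEquiv.contDiff _).comp_contDiffOn ?_
  exact fun x hx => (h x hx).iteratedFDerivWithin_right hs (by push_cast; rw [add_comm]) hx

theorem abs_sub_taylorWithinEval_le {a b B x y : ℝ} {n : ℕ} (hab : a < b) {g : ℝ → ℝ}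
    (hg : ContDiffOn ℝ (⊤ : ℕ∞) g (Icc a b)) (hx : x ∈ Icc a b) (hy : y ∈ Icc a b)
    (hB : ∀ z ∈ Icc a b, |iteratedDerivWithin (n + 1) g (Icc a b) z| ≤ B) :
    |g y - taylorWithinEval g n (Icc a b) x y| ≤ B * |y - x| ^ (n + 1) / (n + 1).factorial := by
  rcases eq_or_ne x y with rfl | hxy
  · simp
  have hsub : uIcc x y ⊆ Icc a b := uIcc_subset_Icc hx hy
  have hu : UniqueDiffOn ℝ (uIcc x y) := uniqueDiffOn_uIcc hxy
  have hle (m : ℕ) : ContDiffOn ℝ m g (Icc a b) := hg.of_le (by exact_mod_cast le_top)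
  have heq (m : ℕ) {z : ℝ} (hz : z ∈ uIcc x y) :
      iteratedDerivWithin m g (uIcc x y) z = iteratedDerivWithin m g (Icc a b) z := by
    rw [iteratedDerivWithin, iteratedDerivWithin,
      iteratedFDerivWithin_subset hsub hu (uniqueDiffOn_Icc hab) (hle m) hz]
  have hdiff : DifferentiableOn ℝ (iteratedDerivWithin n g (uIcc x y)) (uIoo x y) :=
    (((hle (n + 1)).mono hsub).differentiableOn_iteratedDerivWithin
      (by exact_mod_cast Nat.lt_succ_self n) hu).mono uIoo_subset_uIcc_self
  obtain ⟨z, hz, h⟩ := taylor_mean_remainder_lagrange hxy ((hle n).mono hsub) hdiff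
  have hz' := uIoo_subset_uIcc_self hz
  have hT : taylorWithinEval g n (uIcc x y) x y = taylorWithinEval g n (Icc a b) x y := by
    simp only [taylor_within_apply]
    exact Finset.sum_congr rfl fun m _ => by rw [heq m left_mem_uIcc]
  rw [← hT, h, heq _ hz', abs_div, abs_mul, abs_pow, Nat.abs_cast]
  gcongr
  exact hB z (hsub hz')

open Polynomial in
theorem abs_iteratedDerivWithin_mul_pow_le {a b A B x h : ℝ} {n k : ℕ} (hab : a < b) (hk : k ≤ n)
    {g : ℝ → ℝ} (hg : ContDiffOn ℝ (⊤ : ℕ∞) g (Icc a b)) (hA₀ : 0 < A)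
    (hA : ∀ z ∈ Icc a b, |g z| ≤ A)
    (hB : ∀ z ∈ Icc a b, |iteratedDerivWithin (n + 1) g (Icc a b) z| ≤ B)
    (hx : x ∈ Icc a b) (hxh : x + h ∈ Icc a b) :
    |iteratedDerivWithin k g (Icc a b) x| * |h| ^ k ≤
      k.factorial * (8 ^ n * (A + B * |h| ^ (n + 1) / (n + 1).factorial)) := by
  have hB₀ : 0 ≤ B := (abs_nonneg _).trans (hB x hx)
  set R : ℝ[X] := ∑ j ∈ Finset.range (n + 1),
    monomial j ((j.factorial : ℝ)⁻¹ * iteratedDerivWithin j g (Icc a b) x * h ^ j) with hR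
  have hdeg : R.natDegree ≤ n := natDegree_sum_le_of_forall_le _ _ fun j hj =>
    (natDegree_monomial_le _).trans (Nat.lt_succ_iff.1 (Finset.mem_range.1 hj))
  have hcoeff : R.coeff k =
      (k.factorial : ℝ)⁻¹ * iteratedDerivWithin k g (Icc a b) x * h ^ k := by
    simp only [hR, finsetSum_coeff, coeff_monomial, Finset.sum_ite_eq']
    rw [if_pos (Finset.mem_range.2 (Nat.lt_succ_of_le hk))]
  have heval (u : ℝ) : R.eval u = taylorWithinEval g n (Icc a b) x (x + u * h) := by
    rw [taylor_within_apply, hR, eval_finsetSum]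
    refine Finset.sum_congr rfl fun j _ => ?_
    rw [eval_monomial, smul_eq_mul, add_sub_cancel_left, mul_pow]
    ring
  have hbound : ∀ u ∈ Icc (0 : ℝ) 1,
      |R.eval u| ≤ A + B * |h| ^ (n + 1) / (n + 1).factorial := by
    intro u hu
    have hmem : x + u * h ∈ Icc a b := by
      have := (convex_Icc a b) hx hxh (sub_nonneg.2 hu.2) hu.1 (by ring)
      simp only [smul_eq_mul] at this
      convert this using 1
      ring
    have h₁ := abs_sub_taylorWithinEval_le hab hg hx hmem hB
    rw [← heval, add_sub_cancel_left, abs_mul, abs_of_nonneg hu.1] at h₁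
    have h₂ : B * (u * |h|) ^ (n + 1) / (n + 1).factorial ≤
        B * |h| ^ (n + 1) / (n + 1).factorial := by
      have := hu.1
      gcongr
      exact mul_le_of_le_one_left (abs_nonneg h) hu.2
    have h₃ := abs_sub_abs_le_abs_sub (R.eval u) (g (x + u * h))
    rw [abs_sub_comm] at h₃
    linarith [hA _ hmem]
  have h₀ := abs_coeff_le_of_forall_mem_unitInterval hk (by positivity) hdeg hbound
  rw [hcoeff, abs_mul, abs_mul, abs_inv, Nat.abs_cast, abs_pow, mul_assoc,
    inv_mul_le_iff₀ (by positivity)] at h₀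
  rwa [mul_comm (8 ^ n : ℝ)]

theorem pow_le_rpow_pow_of_le_mul {X c : ℝ} (hX : 1 ≤ X) {q N : ℕ} (h : (q : ℝ) ≤ c * N) :
    X ^ q ≤ (X ^ c) ^ N := by
  rw [← Real.rpow_natCast, ← Real.rpow_natCast, ← Real.rpow_mul (by linarith)]
  exact Real.rpow_le_rpow_of_exponent_le hX h

theorem gevrey_lower_order_term_le {c s l : ℝ} (hc : 1 ≤ c) (hs : 1 ≤ s) (hl : 0 < l)
    {p k N q : ℕ} (hp : 1 ≤ p) (hN : p + k = N) (hq : (q : ℝ) ≤ c * N) :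
    (l⁻¹ * (q : ℝ) ^ (s - 1)) ^ k * k.factorial * 8 ^ q * (p : ℝ) ^ (s * p) ≤
      (8 ^ c * (1 + l⁻¹) * c ^ (s - 1)) ^ N * (N : ℝ) ^ ((N : ℝ) * s) := by
  have hkN : k ≤ N := by omega
  have hN₀ : (0 : ℝ) < N := by exact_mod_cast (by omega : 0 < N)
  have hl' : 0 < l⁻¹ := inv_pos.2 hl
  have h₁ : l⁻¹ ^ k ≤ (1 + l⁻¹) ^ N :=
    (pow_le_pow_left₀ hl'.le (by linarith) k).trans (pow_le_pow_right₀ (by linarith) hkN)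
  have h₂ : ((q : ℝ) ^ (s - 1)) ^ k ≤ (c ^ (s - 1)) ^ N * ((N : ℝ) ^ (s - 1)) ^ k := by
    calc ((q : ℝ) ^ (s - 1)) ^ k ≤ ((c * N) ^ (s - 1)) ^ k := by
          gcongr
      _ = (c ^ (s - 1)) ^ k * ((N : ℝ) ^ (s - 1)) ^ k := by
          rw [Real.mul_rpow (by linarith) hN₀.le, mul_pow]
      _ ≤ _ := by
          gcongr
          exact Real.one_le_rpow hc (by linarith)
  have h₃ : (k.factorial : ℝ) ≤ (N : ℝ) ^ k := by
    exact_mod_cast (Nat.factorial_le_pow k).trans (Nat.pow_le_pow_left hkN k)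
  have h₄ : (p : ℝ) ^ (s * p) ≤ (N : ℝ) ^ (s * p) := by
    gcongr
    omega
  have h₅ : ((N : ℝ) ^ (s - 1)) ^ k * (N : ℝ) ^ k * (N : ℝ) ^ (s * p) =
      (N : ℝ) ^ ((N : ℝ) * s) := by
    rw [← Real.rpow_natCast, ← Real.rpow_natCast, ← Real.rpow_mul hN₀.le, ← Real.rpow_add hN₀,
      ← Real.rpow_add hN₀]
    congr 1
    rw [← hN]
    push_cast
    ring
  calc (l⁻¹ * (q : ℝ) ^ (s - 1)) ^ k * k.factorial * 8 ^ q * (p : ℝ) ^ (s * p)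
      = l⁻¹ ^ k * ((q : ℝ) ^ (s - 1)) ^ k * k.factorial * 8 ^ q * (p : ℝ) ^ (s * p) := by
        rw [mul_pow]
    _ ≤ (1 + l⁻¹) ^ N * ((c ^ (s - 1)) ^ N * ((N : ℝ) ^ (s - 1)) ^ k) * (N : ℝ) ^ k *
          (8 ^ c) ^ N * (N : ℝ) ^ (s * p) := by
        gcongr
        exact pow_le_rpow_pow_of_le_mul (by norm_num) hq
    _ = (8 ^ c * (1 + l⁻¹) * c ^ (s - 1)) ^ N * (N : ℝ) ^ ((N : ℝ) * s) := by
        rw [← h₅, mul_pow, mul_pow]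
        ring

theorem gevrey_higher_order_term_le {c s l : ℝ} (hc : 1 ≤ c) (hs : 1 ≤ s) (hl : 0 < l)
    {k j N q : ℕ} (hN₀ : 0 < N) (hjq : N + j = q) (hq : (q : ℝ) ≤ c * N) :
    (k.factorial : ℝ) * 8 ^ q * ((q : ℝ) ^ (s * q) * (l * ((q : ℝ) ^ (s - 1))⁻¹) ^ j /
        (k + j).factorial) ≤
      ((8 * (1 + l) * Real.exp 1) ^ c * c ^ s) ^ N * (N : ℝ) ^ ((N : ℝ) * s) := by
  have hN' : (0 : ℝ) < N := by exact_mod_cast hN₀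
  have hq₀ : (0 : ℝ) < q := by exact_mod_cast (by omega : 0 < q)
  have h₁ : l ^ j ≤ (1 + l) ^ q :=
    (pow_le_pow_left₀ hl.le (by linarith) j).trans (pow_le_pow_right₀ (by linarith) (by omega))
  have h₂ : (q : ℝ) ^ (s * q) * (((q : ℝ) ^ (s - 1))⁻¹) ^ j =
      (q : ℝ) ^ (s * N) * (q : ℝ) ^ j := by
    rw [← Real.rpow_neg hq₀.le, ← Real.rpow_natCast, ← Real.rpow_natCast,
      ← Real.rpow_mul hq₀.le, ← Real.rpow_add hq₀, ← Real.rpow_add hq₀]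
    congr 1
    rw [← hjq]
    push_cast
    ring
  have h₃ : (q : ℝ) ^ (s * N) ≤ (c ^ s) ^ N * (N : ℝ) ^ ((N : ℝ) * s) := by
    calc (q : ℝ) ^ (s * N) ≤ (c * N) ^ (s * N) := by gcongr
      _ = (c ^ s) ^ N * (N : ℝ) ^ ((N : ℝ) * s) := by
        rw [Real.mul_rpow (by linarith) hN'.le, Real.rpow_mul (by linarith), Real.rpow_natCast,
          mul_comm (N : ℝ) s]
  have h₄ : (q : ℝ) ^ j * (k.factorial / (k + j).factorial) ≤ Real.exp 1 ^ q := by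
    have hfac : (k.factorial : ℝ) * j.factorial ≤ (k + j).factorial := by
      exact_mod_cast Nat.le_of_dvd (Nat.factorial_pos _)
        (Nat.factorial_mul_factorial_dvd_factorial_add k j)
    calc (q : ℝ) ^ j * (k.factorial / (k + j).factorial)
        ≤ (q : ℝ) ^ j * (1 / j.factorial) := by
          refine mul_le_mul_of_nonneg_left ?_ (by positivity)
          rw [div_le_div_iff₀ (by positivity) (by positivity)]
          linarith
      _ = (q : ℝ) ^ j / j.factorial := by ring
      _ ≤ Real.exp q := Real.pow_div_factorial_le_exp _ hq₀.le j
      _ = Real.exp 1 ^ q := by rw [← Real.exp_nat_mul, mul_one]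
  have h₅ : (1 : ℝ) ≤ 8 * (1 + l) * Real.exp 1 := by
    nlinarith [Real.add_one_le_exp 1, mul_pos hl (Real.exp_pos 1)]
  calc (k.factorial : ℝ) * 8 ^ q * ((q : ℝ) ^ (s * q) * (l * ((q : ℝ) ^ (s - 1))⁻¹) ^ j /
        (k + j).factorial)
      = 8 ^ q * l ^ j * ((q : ℝ) ^ (s * q) * (((q : ℝ) ^ (s - 1))⁻¹) ^ j) *
          (k.factorial / (k + j).factorial) := by
        rw [mul_pow]
        ring
    _ = 8 ^ q * l ^ j * (q : ℝ) ^ (s * N) *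
          ((q : ℝ) ^ j * (k.factorial / (k + j).factorial)) := by
        rw [h₂]
        ring
    _ ≤ 8 ^ q * (1 + l) ^ q * ((c ^ s) ^ N * (N : ℝ) ^ ((N : ℝ) * s)) * Real.exp 1 ^ q := by
        gcongr
    _ = (8 * (1 + l) * Real.exp 1) ^ q * ((c ^ s) ^ N * (N : ℝ) ^ ((N : ℝ) * s)) := by
        rw [mul_pow, mul_pow]
        ring
    _ ≤ ((8 * (1 + l) * Real.exp 1) ^ c) ^ N * ((c ^ s) ^ N * (N : ℝ) ^ ((N : ℝ) * s)) := by
        gcongr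
        exact pow_le_rpow_pow_of_le_mul h₅ hq
    _ = _ := by rw [mul_pow, ← mul_assoc]

/-- The Gevrey specialization of the main theorem: if a smooth `f` on `[a,b]`
satisfies `max |f^(d n)| ≤ (d n)^(s * d n)` along an increasing divergent
sequence `d` of positive integers with `d (n+1) / d n ≤ c₀`, then `f` belongs
to the Gevrey class `G^s([a,b])`. -/
theorem gevrey_regularity_of_interpolation
    (a b : ℝ) (hab : a < b)
    (s : ℝ) (hs : 1 ≤ s)
    (f : ℝ → ℝ) (hf : ContDiffOn ℝ (⊤ : ℕ∞) f (Icc a b))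
    (c₀ : ℝ) (hc₀ : 0 < c₀)
    (d : ℕ → ℕ) (hdpos : ∀ n, 0 < d n) (hdmono : StrictMono d)
    (hdtop : Tendsto d atTop atTop)
    (hgap : ∀ n, (d (n + 1) : ℝ) / (d n : ℝ) ≤ c₀)
    (hbound : ∀ n, ∀ x ∈ Icc a b,
      |iteratedDerivWithin (d n) f (Icc a b) x| ≤ (d n : ℝ) ^ (s * (d n : ℝ))) :
    ∃ K > 0, ∀ n : ℕ, 1 ≤ n → ∀ x ∈ Icc a b,
      |iteratedDerivWithin n f (Icc a b) x| ≤ K ^ (n + 1) * (n : ℝ) ^ ((n : ℝ) * s) := by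
  have hfd : ∀ j : ℕ, ContDiffOn ℝ (⊤ : ℕ∞) (iteratedDerivWithin j f (Icc a b)) (Icc a b) :=
    contDiffOn_top_iteratedDerivWithin (uniqueDiffOn_Icc hab) hf
  set c : ℝ := max c₀ 1
  have hc : 1 ≤ c := le_max_right _ _
  set l : ℝ := (b - a) / 2 with hldef
  have hl : 0 < l := by linarith
  have hsup : ∀ j : ℕ, ∃ M : ℝ, ∀ x ∈ Icc a b, |iteratedDerivWithin j f (Icc a b) x| ≤ M :=
    fun j => isCompact_Icc.exists_bound_of_continuousOn (hfd j).continuousOn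
  choose M hM using hsup
  have hM₀ : ∀ j, 0 ≤ M j := fun j => (abs_nonneg _).trans (hM j a (left_mem_Icc.2 hab.le))
  set K₀ : ℝ := ∑ j ∈ Finset.range (d 0), M j
  have hK₀ : 0 ≤ K₀ := Finset.sum_nonneg fun j _ => hM₀ j
  set K₁ : ℝ := 8 ^ c * (1 + l⁻¹) * c ^ (s - 1) with hK₁def
  set K₂ : ℝ := (8 * (1 + l) * Real.exp 1) ^ c * c ^ s with hK₂def
  have hK₁ : 0 ≤ K₁ := by positivity
  have hK₂ : 0 ≤ K₂ := by positivity
  refine ⟨K₀ + K₁ + K₂ + 1, by positivity, fun N hN x hx => ?_⟩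
  have hN₁ : (1 : ℝ) ≤ N := by exact_mod_cast hN
  rcases lt_or_ge N (d 0) with hlt | hge
  · calc |iteratedDerivWithin N f (Icc a b) x| ≤ M N := hM N x hx
      _ ≤ K₀ := Finset.single_le_sum (f := M) (fun j _ => hM₀ j) (Finset.mem_range.2 hlt)
      _ ≤ K₀ + K₁ + K₂ + 1 := by linarith
      _ ≤ (K₀ + K₁ + K₂ + 1) ^ (N + 1) := le_self_pow₀ (by linarith) (by omega)
      _ ≤ (K₀ + K₁ + K₂ + 1) ^ (N + 1) * (N : ℝ) ^ ((N : ℝ) * s) :=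
        le_mul_of_one_le_right (by positivity) (Real.one_le_rpow hN₁ (by positivity))
  obtain ⟨i, hi, hi'⟩ : ∃ i, d i ≤ N ∧ N < d (i + 1) := by
    by_contra! hcon
    have hall : ∀ i, d i ≤ N := fun i => by
      induction i with
      | zero => exact hge
      | succ i ih => exact hcon i ih
    exact absurd (hdmono.le_apply.trans (hall (N + 1))) (not_le.2 N.lt_succ_self)
  obtain ⟨k, hk⟩ := Nat.exists_eq_add_of_le hi
  obtain ⟨j, hj⟩ := Nat.exists_eq_add_of_lt hi'
  set p := d i
  set q := d (i + 1)
  have hp₁ : 1 ≤ p := hdpos i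
  have hp₀ : (0 : ℝ) < p := by exact_mod_cast hp₁
  have hq₀ : (0 : ℝ) < q := by exact_mod_cast hdpos (i + 1)
  have hqN : (q : ℝ) ≤ c * N := by
    have h := (div_le_iff₀ hp₀).1 (hgap i)
    have hpN : (p : ℝ) ≤ N := by exact_mod_cast hi
    calc (q : ℝ) ≤ c₀ * p := h
      _ ≤ c * N := by gcongr; exact le_max_left _ _
  set η : ℝ := l * ((q : ℝ) ^ (s - 1))⁻¹ with hη
  have hη₀ : 0 < η := by positivity
  have hηl : η ≤ l := mul_le_of_le_one_right hl.le
    (inv_le_one_of_one_le₀ (Real.one_le_rpow (by exact_mod_cast hdpos (i + 1)) (by linarith)))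
  obtain ⟨h, hh, hxh⟩ : ∃ h : ℝ, |h| = η ∧ x + h ∈ Icc a b := by
    rcases le_total x ((a + b) / 2) with hx' | hx'
    · exact ⟨η, abs_of_pos hη₀, by linarith [hx.1], by linarith⟩
    · exact ⟨-η, by rw [abs_neg, abs_of_pos hη₀], by linarith, by linarith [hx.2]⟩
  have hmain := abs_iteratedDerivWithin_mul_pow_le (n := k + j) (k := k) hab (by omega) (hfd p)
    (Real.rpow_pos_of_pos hp₀ (s * p)) (hbound i) (B := (q : ℝ) ^ (s * q))
    (fun z hz => by
      rw [iteratedDerivWithin_iteratedDerivWithin, show p + (k + j + 1) = q by omega]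
      exact hbound (i + 1) z hz) hx hxh
  rw [iteratedDerivWithin_iteratedDerivWithin, ← hk, hh] at hmain
  have h₁ := gevrey_lower_order_term_le (l := l) hc hs hl hp₁ hk.symm hqN
  have h₂ := gevrey_higher_order_term_le (l := l) (k := k) (j := j + 1) hc hs hl
    (by omega : 0 < N) (by omega) hqN
  rw [← hK₁def] at h₁
  rw [← hK₂def, ← hη, ← add_assoc] at h₂
  have hηinv : η⁻¹ = l⁻¹ * (q : ℝ) ^ (s - 1) := by rw [hη, mul_inv, inv_inv]
  rw [← hηinv] at h₁
  have h8 : (8 : ℝ) ^ (k + j) ≤ 8 ^ q := pow_le_pow_right₀ (by norm_num) (by omega)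
  calc |iteratedDerivWithin N f (Icc a b) x|
      = |iteratedDerivWithin N f (Icc a b) x| * η ^ k * η⁻¹ ^ k := by
        rw [inv_pow, mul_inv_cancel_right₀ (by positivity)]
    _ ≤ k.factorial * (8 ^ (k + j) * ((p : ℝ) ^ (s * p) +
          (q : ℝ) ^ (s * q) * η ^ (k + j + 1) / (k + j + 1).factorial)) * η⁻¹ ^ k := by
        gcongr
    _ ≤ k.factorial * (8 ^ q * ((p : ℝ) ^ (s * p) +
          (q : ℝ) ^ (s * q) * η ^ (k + j + 1) / (k + j + 1).factorial)) * η⁻¹ ^ k := by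
        gcongr
    _ = η⁻¹ ^ k * k.factorial * 8 ^ q * (p : ℝ) ^ (s * p) +
          k.factorial * 8 ^ q * ((q : ℝ) ^ (s * q) * η ^ (j + 1) / (k + j + 1).factorial) := by
        have hcancel : η ^ (k + j + 1) * η⁻¹ ^ k = η ^ (j + 1) := by
          rw [add_assoc, pow_add, inv_pow, mul_right_comm, mul_inv_cancel₀ (by positivity), one_mul]
        rw [← hcancel]
        ring
    _ ≤ K₁ ^ N * (N : ℝ) ^ ((N : ℝ) * s) + K₂ ^ N * (N : ℝ) ^ ((N : ℝ) * s) := add_le_add h₁ h₂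
    _ = (K₁ ^ N + K₂ ^ N) * (N : ℝ) ^ ((N : ℝ) * s) := by ring
    _ ≤ (K₀ + K₁ + K₂ + 1) ^ (N + 1) * (N : ℝ) ^ ((N : ℝ) * s) := by
        gcongr
        calc K₁ ^ N + K₂ ^ N ≤ (K₁ + K₂) ^ N := pow_add_pow_le hK₁ hK₂ (by omega)
          _ ≤ (K₀ + K₁ + K₂ + 1) ^ N :=
            pow_le_pow_left₀ (by positivity) (by linarith) N
          _ ≤ (K₀ + K₁ + K₂ + 1) ^ (N + 1) := pow_le_pow_right₀ (by linarith) (by omega)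
end
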